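/- arXiv:1912.02369 — 13 statements merged into one kernel-verified Lean document; each statement's English description precedes it below -/
import Mathlib

section
/- Every discrete solvable subgroup G of GL(3,ℂ) is virtually triangularizable: there exist a finite-index subgroup H of G and a matrix τ ∈ GL(3,ℂ) such that τ h τ⁻¹ is an upper triangular matrix for every h ∈ H. -/
open Module
open scoped Matrix commutatorElement

theorem aux_FI {G X : Type*} [Group G] (K : Subgroup G) (f : G → X) (hf : (Set.range f).Finite)
    (h : ∀ g g', f g = f g' → g⁻¹ * g' ∈ K) : K.FiniteIndex := by
  have : Finite (Set.range f) := hf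
  have : Finite (G ⧸ K) := by
    refine Finite.of_injective (β := Set.range f) (fun q => ⟨f q.out, ⟨_, rfl⟩⟩) ?_
    intro a b hab
    have := h _ _ (Subtype.ext_iff.1 hab)
    rw [← QuotientGroup.out_eq' a, ← QuotientGroup.out_eq' b]
    exact QuotientGroup.eq.2 this
  exact Subgroup.finiteIndex_of_finite_quotient

variable {V : Type*} [AddCommGroup V] [Module ℂ V] [FiniteDimensional ℂ V]

theorem aux_eig (T : End ℂ V) (U : Submodule ℂ V) (hU : U ≠ ⊥) (hT : ∀ u ∈ U, T u ∈ U) :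
    ∃ c : ℂ, U ⊓ End.eigenspace T c ≠ ⊥ := by
  have : Nontrivial U := Submodule.nontrivial_iff_ne_bot.2 hU
  obtain ⟨c, hc⟩ := End.exists_eigenvalue (T.restrict hT)
  obtain ⟨v, hv⟩ := hc.exists_hasEigenvector
  refine ⟨c, (Submodule.ne_bot_iff _).2 ⟨v, ⟨v.2, ?_⟩, fun h => hv.2 (Subtype.ext h)⟩⟩
  rw [SetLike.mem_coe, End.mem_eigenspace_iff]
  simpa using congrArg Subtype.val hv.apply_eq_smul

/-- irreducible under all finite index subgroups -/
def auxIrr {G : Type*} [Group G] (ρ : G →* End ℂ V) : Prop :=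
  ∀ K : Subgroup G, K.FiniteIndex → ∀ U : Submodule ℂ V,
    (∀ k ∈ K, ∀ u ∈ U, ρ k u ∈ U) → U ≠ ⊥ → U = ⊤

theorem aux_schur [Nontrivial V] {G : Type*} [Group G] (ρ : G →* End ℂ V) (hρ : auxIrr ρ)
    (K : Subgroup G) (hK : K.FiniteIndex) (T : End ℂ V) (hT : ∀ k ∈ K, T * ρ k = ρ k * T) :
    ∃ c : ℂ, T = c • 1 := by
  obtain ⟨c, hc⟩ := aux_eig T ⊤ top_ne_bot (by simp)
  rw [top_inf_eq] at hc
  refine ⟨c, ?_⟩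
  have := hρ K hK (End.eigenspace T c) ?_ hc
  · ext v
    have hv : v ∈ End.eigenspace T c := this ▸ Submodule.mem_top
    simpa [End.mem_eigenspace_iff] using hv
  · intro k hk u hu
    rw [End.mem_eigenspace_iff] at hu ⊢
    have := LinearMap.congr_fun (hT k hk) u
    simp only [Module.End.mul_apply] at this
    rw [this, hu, map_smul]

theorem aux_common [Nontrivial V] {ι : Type*} (f : ι → End ℂ V)
    (hf : ∀ i j, f i * f j = f j * f i) :
    ∃ χ : ι → ℂ, (⨅ i, End.eigenspace (f i) (χ i)) ≠ ⊥ := by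
  obtain ⟨U, ⟨hU, hUi⟩, hmin⟩ := (wellFounded_lt (α := Submodule ℂ V)).has_min
    {U | U ≠ ⊥ ∧ ∀ i, ∀ u ∈ U, f i u ∈ U} ⟨⊤, top_ne_bot, by simp⟩
  have key : ∀ i, ∃ c, U ≤ End.eigenspace (f i) c := by
    intro i
    obtain ⟨c, hc⟩ := aux_eig (f i) U hU (hUi i)
    refine ⟨c, ?_⟩
    by_contra hcon
    refine hmin (U ⊓ End.eigenspace (f i) c) ⟨hc, ?_⟩ ?_
    · rintro j u ⟨hu, hu'⟩
      refine ⟨hUi j u hu, ?_⟩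
      rw [SetLike.mem_coe, End.mem_eigenspace_iff] at hu' ⊢
      have := LinearMap.congr_fun (hf i j) u
      simp only [Module.End.mul_apply] at this
      rw [this, hu', map_smul]
    · exact lt_of_le_of_ne inf_le_left (fun h => hcon (h ▸ inf_le_right))
  choose χ hχ using key
  exact ⟨χ, fun h => hU (le_bot_iff.1 (h ▸ le_iInf hχ))⟩

theorem aux_fin {ι : Type*} (f : ι → End ℂ V)
    (hf : ∀ i j, f i * f j = f j * f i) :
    {χ : ι → ℂ | (⨅ i, End.eigenspace (f i) (χ i)) ≠ ⊥}.Finite := by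
  have h1 := End.independent_iInf_maxGenEigenspace_of_forall_mapsTo f
    (fun i j φ => End.mapsTo_maxGenEigenspace_of_comm (hf j i) φ)
  have h2 : iSupIndep (fun χ : ι → ℂ => ⨅ i, End.eigenspace (f i) (χ i)) :=
    h1.mono (fun χ => iInf_mono (fun i => (End.genEigenspace (f i) (χ i)).monotone le_top))
  exact WellFoundedGT.finite_ne_bot_of_iSupIndep h2

theorem aux_abel [Nontrivial V] {G : Type*} [Group G] (ρ : G →* End ℂ V) (hρ : auxIrr ρ)
    (N : Subgroup G) (hN : N.Normal) (hc : ∀ x ∈ N, ∀ y ∈ N, ρ x * ρ y = ρ y * ρ x) :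
    ∀ x ∈ N, ∃ c : ℂ, ρ x = c • 1 := by
  have hc' : ∀ x y : N, ρ x * ρ y = ρ y * ρ x := fun x y => hc x x.2 y y.2
  obtain ⟨χ, hχ⟩ := aux_common (fun x : N => ρ x) hc'
  have hfin := aux_fin (fun x : N => ρ x) hc'
  set W : (N → ℂ) → Submodule ℂ V := fun χ => ⨅ i : N, End.eigenspace (ρ i) (χ i) with hW
  have memW : ∀ χ v, v ∈ W χ ↔ ∀ i : N, ρ i v = χ i • v := by
    intro χ v; simp [hW, Submodule.mem_iInf, End.mem_eigenspace_iff]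
  let cj : G → N → N := fun g x => ⟨g * x * g⁻¹, hN.conj_mem x x.2 g⟩
  let F : G → (N → ℂ) := fun g x => χ (cj g⁻¹ x)
  have inv1 : ∀ g v, ρ g⁻¹ (ρ g v) = v := fun g v => by
    rw [← Module.End.mul_apply, ← map_mul]; simp
  have hmove : ∀ g v, v ∈ W χ → ρ g v ∈ W (F g) := by
    intro g v hv
    rw [memW] at hv ⊢
    intro i
    rw [show F g i = χ (cj g⁻¹ i) from rfl, ← map_smul, ← hv]
    simp only [cj, ← Module.End.mul_apply, ← map_mul]
    congr 2; group
  let K : Subgroup G :=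
    { carrier := {g | ∀ x, χ (cj g x) = χ x}
      one_mem' := by intro x; simp [cj]
      mul_mem' := by
        intro a b ha hb x
        rw [← hb x, ← ha (cj b x)]
        congr 1; simp [cj, mul_assoc]
      inv_mem' := by
        intro a ha x
        rw [← ha (cj a⁻¹ x)]
        congr 1; simp [cj, mul_assoc] }
  have hK : K.FiniteIndex := by
    refine aux_FI K F (hfin.subset ?_) ?_
    · rintro _ ⟨g, rfl⟩
      obtain ⟨v, hv, hv0⟩ := (Submodule.ne_bot_iff _).1 hχ
      refine (Submodule.ne_bot_iff _).2 ⟨ρ g v, hmove g v hv, fun h => hv0 ?_⟩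
      rw [← inv1 g v, h, map_zero]
    · intro g g' h x
      have := congrFun h (cj g' x)
      simp only [F] at this
      have e1 : cj g⁻¹ (cj g' x) = cj (g⁻¹ * g') x := by simp [cj, mul_assoc]
      have e2 : cj g'⁻¹ (cj g' x) = x := by simp [cj, mul_assoc]
      rw [e1, e2] at this
      exact this
  have htop := hρ K hK (W χ) ?_ hχ
  · intro x hx
    refine ⟨χ ⟨x, hx⟩, ?_⟩
    ext v
    have hv : v ∈ W χ := htop ▸ Submodule.mem_top
    simpa using (memW χ v).1 hv ⟨x, hx⟩
  · intro k hk u hu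
    have := hmove k u hu
    have e : F k = χ := by
      funext x; exact K.inv_mem hk x
    rwa [e] at this

theorem aux_step [Nontrivial V] {G : Type*} [Group G] (ρ : G →* End ℂ V) (hρ : auxIrr ρ)
    (N : Subgroup G) (hN : N.Normal) (hc : ∀ x ∈ N, ∀ y ∈ N, ∃ c : ℂ, ρ ⁅x, y⁆ = c • 1) :
    ∀ x ∈ N, ∃ c : ℂ, ρ x = c • 1 := by
  have hn : 0 < finrank ℂ V := finrank_pos
  have hdet : ∀ g, LinearMap.det (ρ g) ≠ 0 := by
    intro g h
    have : LinearMap.det (ρ g) * LinearMap.det (ρ g⁻¹) = 1 := by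
      rw [← map_mul, ← map_mul]; simp
    rw [h, zero_mul] at this; exact zero_ne_one this
  have hroot : ∀ (c : ℂ) (A B : End ℂ V), A = c • B → LinearMap.det A = LinearMap.det B →
      LinearMap.det A ≠ 0 → c ^ finrank ℂ V = 1 := by
    intro c A B h h1 h2
    have := congrArg LinearMap.det h
    rw [LinearMap.det_smul, ← h1] at this
    exact mul_right_cancel₀ h2 (by rw [one_mul]; exact this.symm)
  let R : Set ℂ := {c | c ^ finrank ℂ V = 1}
  have hR : R.Finite := by
    have := (Polynomial.nthRoots (finrank ℂ V) (1:ℂ)).toFinset.finite_toSet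
    refine this.subset ?_
    intro c hc
    have hc' : c ^ finrank ℂ V = 1 := hc
    simpa [Polynomial.mem_nthRoots hn] using hc'
  have hcomm : ∀ x ∈ N, ∀ y ∈ N, ∃ c ∈ R, ρ x * ρ y = c • (ρ y * ρ x) := by
    intro x hx y hy
    obtain ⟨c, h⟩ := hc x hx y hy
    have e : ρ x * ρ y = c • (ρ y * ρ x) := by
      have : x * y = ⁅x, y⁆ * (y * x) := by simp [commutatorElement_def, mul_assoc]
      rw [← map_mul, this, map_mul, h, map_mul]; simp
    refine ⟨c, hroot c _ _ e ?_ ?_, e⟩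
    · simp only [map_mul]; ring
    · rw [← map_mul]; exact hdet _
  choose! ζ hζR hζ using hcomm
  let C : Subgroup G :=
    { carrier := {x | x ∈ N ∧ ∀ y ∈ N, ρ x * ρ y = ρ y * ρ x}
      one_mem' := ⟨N.one_mem, by simp⟩
      mul_mem' := by
        rintro a b ⟨ha, ha'⟩ ⟨hb, hb'⟩
        refine ⟨N.mul_mem ha hb, fun y hy => ?_⟩
        rw [map_mul, mul_assoc, hb' y hy, ← mul_assoc, ha' y hy, mul_assoc]
      inv_mem' := by
        rintro a ⟨ha, ha'⟩
        refine ⟨N.inv_mem ha, fun y hy => ?_⟩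
        have i1 : ρ a⁻¹ * ρ a = 1 := by rw [← map_mul]; simp
        have i2 : ρ a * ρ a⁻¹ = 1 := by rw [← map_mul]; simp
        calc ρ a⁻¹ * ρ y = ρ a⁻¹ * (ρ y * ρ a) * ρ a⁻¹ := by simp [mul_assoc, i2]
          _ = (ρ a⁻¹ * ρ a) * ρ y * ρ a⁻¹ := by rw [← ha' y hy]; simp only [mul_assoc]
          _ = _ := by rw [i1, one_mul] }
  have hCN : C.Normal := by
    refine ⟨fun a ha g => ⟨hN.conj_mem a ha.1 g, fun y hy => ?_⟩⟩
    have h1 := ha.2 (g⁻¹ * y * g) (by simpa using hN.conj_mem y hy g⁻¹)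
    have h2 : ρ g * (ρ a * ρ (g⁻¹ * y * g)) * ρ g⁻¹ =
      ρ g * (ρ (g⁻¹ * y * g) * ρ a) * ρ g⁻¹ := by rw [h1]
    simp only [← map_mul] at h2 ⊢
    convert h2 using 2 <;> group
  have hCs := aux_abel ρ hρ C hCN (fun x hx y hy => hx.2 y hy.1)
  -- spanning set
  obtain ⟨s, hs, hspan⟩ : ∃ s : Finset (End ℂ V), (s : Set (End ℂ V)) ⊆ ρ '' N ∧
      Submodule.span ℂ (ρ '' (N : Set G)) = Submodule.span ℂ s :=
    Submodule.fg_span_iff_fg_span_finset_subset _ |>.1 (IsNoetherian.noetherian _)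
  have hs' : ∀ t : s, ∃ d ∈ N, ρ d = t := fun t => hs t.2
  choose d hdN hd using hs'
  have hCmem : ∀ x ∈ N, (∀ t, ρ x * ρ (d t) = ρ (d t) * ρ x) → x ∈ C := by
    intro x hx h
    refine ⟨hx, fun y hy => ?_⟩
    have hy' : ρ y ∈ Submodule.span ℂ (s : Set (End ℂ V)) :=
      hspan ▸ Submodule.subset_span ⟨y, hy, rfl⟩
    generalize ρ y = B at hy'
    induction hy' using Submodule.span_induction with
    | mem T hT => have := h ⟨T, hT⟩; rw [hd] at this; exact this
    | zero => simp
    | add a b _ _ ha hb => rw [mul_add, add_mul, ha, hb]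
    | smul c a _ ha => rw [mul_smul_comm, smul_mul_assoc, ha]
  intro x hx
  let K : Subgroup G :=
    { carrier := {g | ρ (g * x * g⁻¹) = ρ x}
      one_mem' := by simp
      mul_mem' := by
        intro a b ha hb
        simp only [Set.mem_ofPred_eq] at *
        rw [← ha, show a * b * x * (a * b)⁻¹ = a * (b * x * b⁻¹) * a⁻¹ by group,
          map_mul, map_mul, hb, ← map_mul, ← map_mul]
      inv_mem' := by
        intro a ha
        simp only [Set.mem_ofPred_eq] at *
        conv_lhs => rw [map_mul, map_mul, ← ha, ← map_mul, ← map_mul]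
        congr 1; group }
  have hfin : (Set.range (fun g => ρ (g * x * g⁻¹))).Finite := by
    let Y := Set.pi Set.univ (fun _ : s => R)
    have hY : Y.Finite := Set.Finite.pi' (fun _ => hR) |>.subset (by intro f hf i; exact hf i trivial)
    refine Set.Finite.subset (s := ⋃ y ∈ Y, {T | ∃ g, T = ρ (g * x * g⁻¹) ∧
        (fun t => ζ (g * x * g⁻¹) (d t)) = y}) ?_ ?_
    · refine hY.biUnion (fun y _ => ?_)
      by_cases hne : ∃ g0, (fun t => ζ (g0 * x * g0⁻¹) (d t)) = y
      · obtain ⟨g0, hg0⟩ := hne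
        refine (hR.image (fun c => c • ρ (g0 * x * g0⁻¹))).subset ?_
        rintro _ ⟨g, rfl, hg⟩
        have ha := hN.conj_mem x hx g0
        have hb := hN.conj_mem x hx g
        have hda : LinearMap.det (ρ (g * x * g⁻¹)) = LinearMap.det (ρ (g0 * x * g0⁻¹)) := by
          have : ∀ g, LinearMap.det (ρ (g * x * g⁻¹)) = LinearMap.det (ρ x) := by
            intro g
            have : LinearMap.det (ρ g) * LinearMap.det (ρ g⁻¹) = 1 := by
              rw [← map_mul, ← map_mul]; simp
            simp only [map_mul]
            linear_combination LinearMap.det (ρ x) * this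
          rw [this, this]
        generalize g0 * x * g0⁻¹ = a at *
        generalize g * x * g⁻¹ = b at *
        have hab : b * a⁻¹ ∈ C := by
          refine hCmem _ (N.mul_mem hb (N.inv_mem ha)) (fun t => ?_)
          have e : ζ b (d t) = ζ a (d t) := by rw [← hg] at hg0; exact (congrFun hg0 t).symm
          have h1 := hζ b hb (d t) (hdN t)
          have h2 := hζ a ha (d t) (hdN t)
          have hz : ζ b (d t) ≠ 0 := by
            intro h0
            have := hζR b hb (d t) (hdN t)
            simp only [R, Set.mem_ofPred_eq, h0, zero_pow hn.ne'] at this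
            exact zero_ne_one this
          rw [← e] at h2
          have i1 : ρ a⁻¹ * ρ a = 1 := by rw [← map_mul]; simp
          have i2 : ρ a * ρ a⁻¹ = 1 := by rw [← map_mul]; simp
          have h3 : ρ (d t) * ρ a⁻¹ = ζ b (d t) • (ρ a⁻¹ * ρ (d t)) := by
            calc ρ (d t) * ρ a⁻¹ = ρ a⁻¹ * (ρ a * ρ (d t)) * ρ a⁻¹ := by
                  rw [← mul_assoc, i1, one_mul]
              _ = ζ b (d t) • (ρ a⁻¹ * ρ (d t) * (ρ a * ρ a⁻¹)) := by
                  rw [h2]; simp only [mul_smul_comm, smul_mul_assoc, mul_assoc]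
              _ = _ := by rw [i2, mul_one]
          apply smul_right_injective _ hz
          simp only
          calc ζ b (d t) • (ρ (b * a⁻¹) * ρ (d t)) = ρ b * (ζ b (d t) • (ρ a⁻¹ * ρ (d t))) := by
                rw [map_mul, mul_smul_comm, mul_assoc]
            _ = (ρ b * ρ (d t)) * ρ a⁻¹ := by rw [← h3, mul_assoc]
            _ = _ := by rw [h1, map_mul, smul_mul_assoc, mul_assoc]
        obtain ⟨c, hc⟩ := hCs _ hab
        have e : ρ b = c • ρ a := by
          have : b = (b * a⁻¹) * a := by group
          rw [this, map_mul, hc]; simp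
        exact ⟨c, hroot c _ _ e hda (hdet _), e.symm⟩
      · convert Set.finite_empty
        ext T
        simp only [Set.mem_ofPred_eq, Set.mem_empty_iff_false, iff_false]
        rintro ⟨g, _, hg⟩
        exact hne ⟨g, hg⟩
    · rintro _ ⟨g, rfl⟩
      refine Set.mem_biUnion (x := fun t => ζ (g * x * g⁻¹) (d t)) ?_ ⟨g, rfl, rfl⟩
      intro t _
      exact hζR _ (hN.conj_mem x hx g) _ (hdN t)
  have hK : K.FiniteIndex := by
    refine aux_FI K _ hfin ?_
    intro g g' h
    show ρ _ = ρ x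
    rw [show g⁻¹ * g' * x * (g⁻¹ * g')⁻¹ = g⁻¹ * (g' * x * g'⁻¹) * g by group,
      map_mul, map_mul, ← (show ρ (g * x * g⁻¹) = ρ (g' * x * g'⁻¹) from h), ← map_mul, ← map_mul]
    congr 1; group
  refine aux_schur ρ hρ K hK (ρ x) (fun k hk => ?_)
  have hk' : ρ (k * x * k⁻¹) = ρ x := hk
  rw [← hk', ← map_mul, inv_mul_cancel_right, hk', map_mul]

theorem aux_solv [Nontrivial V] {G : Type*} [Group G] [Group.IsSolvable G]
    (ρ : G →* End ℂ V) (hρ : auxIrr ρ) (g : G) : ∃ c : ℂ, ρ g = c • 1 := by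
  obtain ⟨n, hn⟩ := (Group.isSolvable_def G).1 inferInstance
  have key : ∀ k, k ≤ n → ∀ x ∈ derivedSeries G (n - k), ∃ c : ℂ, ρ x = c • 1 := by
    intro k
    induction k with
    | zero =>
      intro _ x hx
      rw [Nat.sub_zero, hn, Subgroup.mem_bot] at hx
      exact ⟨1, by simp [hx]⟩
    | succ k ih =>
      intro hk
      refine aux_step ρ hρ _ inferInstance (fun x hx y hy => ih (by omega) _ ?_)
      rw [show n - k = n - (k + 1) + 1 by omega, derivedSeries_succ]
      exact Subgroup.commutator_mem_commutator hx hy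
  exact key n le_rfl g (by simp)

theorem aux_eigvec [Nontrivial V] {G : Type*} [Group G] [Group.IsSolvable G]
    (ρ : G →* End ℂ V) : ∃ H : Subgroup G, H.FiniteIndex ∧ ∃ v : V, v ≠ 0 ∧
      ∀ h ∈ H, ∃ c : ℂ, ρ h v = c • v := by
  obtain ⟨U, ⟨hU, H, hH, hUi⟩, hmin⟩ := (wellFounded_lt (α := Submodule ℂ V)).has_min
    {U | U ≠ ⊥ ∧ ∃ H : Subgroup G, H.FiniteIndex ∧ ∀ h ∈ H, ∀ u ∈ U, ρ h u ∈ U}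
    ⟨⊤, top_ne_bot, ⊤, inferInstance, by simp⟩
  have : Nontrivial U := Submodule.nontrivial_iff_ne_bot.2 hU
  let σ : H →* End ℂ U :=
    { toFun := fun h => (ρ h).restrict (hUi h h.2)
      map_one' := by ext; simp
      map_mul' := by intro a b; ext; simp }
  have hσ : auxIrr σ := by
    intro K hK W hW hW0
    by_contra hne
    refine hmin (W.map U.subtype) ⟨?_, K.map H.subtype, ?_, ?_⟩ ?_
    · intro h0
      refine hW0 ((Submodule.eq_bot_iff _).2 fun w hw => ?_)
      have : (w : V) ∈ W.map U.subtype := ⟨w, hw, rfl⟩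
      rw [h0, Submodule.mem_bot] at this
      exact Subtype.ext this
    · refine ⟨?_⟩
      rw [Subgroup.index_map_subtype]
      exact mul_ne_zero hK.1 hH.1
    · rintro _ ⟨k, hk, rfl⟩ _ ⟨w, hw, rfl⟩
      exact ⟨σ k w, hW k hk w hw, rfl⟩
    · refine lt_of_le_of_ne (Submodule.map_subtype_le _ _) (fun h => hne ?_)
      rw [eq_top_iff]
      intro w _
      have : (w : V) ∈ W.map U.subtype := h.ge w.2
      obtain ⟨w', h1, h2⟩ := this
      exact (Subtype.ext h2 : w' = w) ▸ h1
  obtain ⟨v, hv⟩ := exists_ne (0 : U)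
  refine ⟨H, hH, v, by simpa using hv, fun h hh => ?_⟩
  obtain ⟨c, hc⟩ := aux_solv σ hσ ⟨h, hh⟩
  refine ⟨c, ?_⟩
  have := congrArg Subtype.val (LinearMap.congr_fun hc v)
  simpa [σ] using this

theorem stmt_0 (G : Subgroup (Matrix.GeneralLinearGroup (Fin 3) ℂ))
    (hdisc : DiscreteTopology G) (hsolv : IsSolvable G) :
    ∃ (H : Subgroup (Matrix.GeneralLinearGroup (Fin 3) ℂ))
      (τ : Matrix.GeneralLinearGroup (Fin 3) ℂ),
      H ≤ G ∧ (H.subgroupOf G).FiniteIndex ∧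
      ∀ h ∈ H, ∀ i j : Fin 3, j < i →
        ((τ * h * τ⁻¹ : Matrix.GeneralLinearGroup (Fin 3) ℂ) :
          Matrix (Fin 3) (Fin 3) ℂ) i j = 0 := by
  let ρ : G →* End ℂ (Fin 3 → ℂ) :=
    { toFun := fun g => Matrix.toLin' ((g : Matrix.GeneralLinearGroup (Fin 3) ℂ) : Matrix _ _ ℂ)
      map_one' := by simp; rfl
      map_mul' := by intro a b; simp [Matrix.toLin'_mul]; rfl }
  have hρ : ∀ g v, ρ g v = ((g : Matrix.GeneralLinearGroup (Fin 3) ℂ) : Matrix _ _ ℂ).mulVec v :=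
    fun g v => Matrix.toLin'_apply _ _
  have : Group.IsSolvable G := hsolv
  obtain ⟨H1, hH1, v1, hv1, hE1⟩ := aux_eigvec ρ
  let L : Submodule ℂ (Fin 3 → ℂ) := Submodule.span ℂ {v1}
  have hL : finrank ℂ L = 1 := finrank_span_singleton hv1
  have hLi : ∀ h : H1, L ≤ L.comap (ρ h) := by
    intro h
    obtain ⟨c, hc⟩ := hE1 h h.2
    rw [Submodule.span_singleton_le_iff_mem, Submodule.mem_comap, hc]
    exact L.smul_mem _ (Submodule.mem_span_singleton_self _)
  have hQ : finrank ℂ ((Fin 3 → ℂ) ⧸ L) = 2 := by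
    have := L.finrank_quotient_add_finrank
    simp at this; omega
  have : Nontrivial ((Fin 3 → ℂ) ⧸ L) := nontrivial_of_finrank_pos (R := ℂ) (by omega)
  let σ : H1 →* End ℂ ((Fin 3 → ℂ) ⧸ L) :=
    { toFun := fun h => L.mapQ L (ρ h) (hLi h)
      map_one' := by ext; simp
      map_mul' := by intro a b; ext; simp }
  obtain ⟨H2, hH2, v2', hv2', hE2⟩ := aux_eigvec σ
  obtain ⟨v2, rfl⟩ := L.mkQ_surjective v2'
  have hv2 : v2 ∉ L := fun h => hv2' (by simpa using h)
  obtain ⟨v3, hv3⟩ : ∃ v3, v3 ∉ Submodule.span ℂ {v2, v1} := by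
    by_contra! hcon
    have h1 : Submodule.span ℂ {v2, v1} = ⊤ := eq_top_iff.2 (fun v _ => hcon v)
    have h2 := finrank_span_finset_le_card (R := ℂ) ({v2, v1} : Finset (Fin 3 → ℂ))
    have h3 : ({v2, v1} : Finset (Fin 3 → ℂ)).card ≤ 2 := Finset.card_le_two
    have e : ((({v2, v1} : Finset (Fin 3 → ℂ))) : Set (Fin 3 → ℂ)) = {v2, v1} := by ext; simp
    rw [Set.finrank, e, h1, finrank_top] at h2
    simp at h2; omega
  have hli : LinearIndependent ℂ ![v3, v2, v1] := by
    have r1 : Set.range ![v1] = {v1} := by simp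
    have r2 : Set.range ![v2, v1] = {v2, v1} := by 
      simp [Matrix.range_cons, Matrix.range_empty, Set.pair_comm]
    have l1 : LinearIndependent ℂ ![v1] := by
      rw [linearIndependent_unique_iff]
      simpa using hv1
    have l2 : LinearIndependent ℂ ![v2, v1] :=
      linearIndependent_finCons.2 ⟨l1, by rw [r1]; exact hv2⟩
    exact linearIndependent_finCons.2 ⟨l2, by rw [r2]; exact hv3⟩
  let P : Matrix (Fin 3) (Fin 3) ℂ := (Matrix.of ![v1, v2, v3])ᵀ
  have hP : IsUnit P := by
    rw [← Matrix.linearIndependent_cols_iff_isUnit]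
    have : LinearIndependent ℂ (![v3, v2, v1] ∘ ![2, 1, 0]) := 
      hli.comp _ (by decide)
    have e : P.col = ![v3, v2, v1] ∘ ![2, 1, 0] := by
      ext i j
      fin_cases i <;> rfl
    rw [e]; exact this
  obtain ⟨p, hp⟩ := hP
  refine ⟨(H2.map H1.subtype).map G.subtype, p⁻¹, ?_, ?_, ?_⟩
  · exact Subgroup.map_subtype_le _
  · rw [Subgroup.subgroupOf, Subgroup.comap_map_eq_self_of_injective G.subtype_injective]
    refine ⟨?_⟩
    rw [Subgroup.index_map_subtype]
    exact mul_ne_zero hH2.1 hH1.1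
  · rintro _ ⟨_, ⟨h, hh, rfl⟩, rfl⟩
    obtain ⟨c1, hc1⟩ := hE1 h h.2
    obtain ⟨c2, hc2⟩ := hE2 h hh
    have hc2' : ρ h v2 - c2 • v2 ∈ L := by
      rw [← Submodule.Quotient.mk_eq_zero, Submodule.Quotient.mk_sub, sub_eq_zero]
      exact hc2
    obtain ⟨a, ha⟩ := Submodule.mem_span_singleton.1 hc2'
    have ha' : ρ h v2 = a • v1 + c2 • v2 := by rw [ha]; abel
    rw [hρ] at hc1 ha'
    set M : Matrix (Fin 3) (Fin 3) ℂ :=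
      (((h : G) : Matrix.GeneralLinearGroup (Fin 3) ℂ) : Matrix (Fin 3) (Fin 3) ℂ) with hM
    have hinv : ((p⁻¹ : Matrix.GeneralLinearGroup (Fin 3) ℂ) : Matrix _ _ ℂ) * P = 1 := by
      rw [← hp, ← Units.val_mul]; simp
    have hcol : ∀ j, P.mulVec (Pi.single j 1) = (![v1, v2, v3] : Fin 3 → Fin 3 → ℂ) j := by
      intro j; rw [Matrix.mulVec_single_one]; rfl
    have hentry : ∀ i j, (((p⁻¹ * ((h : G) : Matrix.GeneralLinearGroup (Fin 3) ℂ) * p⁻¹⁻¹ :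
        Matrix.GeneralLinearGroup (Fin 3) ℂ) : Matrix (Fin 3) (Fin 3) ℂ)) i j =
        ((p⁻¹ : Matrix.GeneralLinearGroup (Fin 3) ℂ) : Matrix _ _ ℂ).mulVec
          (M.mulVec ((![v1, v2, v3] : Fin 3 → Fin 3 → ℂ) j)) i := by
      intro i j
      rw [← hcol, Matrix.mulVec_mulVec, Matrix.mulVec_mulVec, Matrix.mulVec_single_one, inv_inv,
        Units.val_mul, Units.val_mul, hp]
      simp [Matrix.col, mul_assoc, hM]
    have hb : ∀ j, ((p⁻¹ : Matrix.GeneralLinearGroup (Fin 3) ℂ) : Matrix _ _ ℂ).mulVec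
        ((![v1, v2, v3] : Fin 3 → Fin 3 → ℂ) j) = Pi.single j 1 := by
      intro j; rw [← hcol, Matrix.mulVec_mulVec, hinv, Matrix.one_mulVec]
    have hb0 := hb 0
    have hb1 := hb 1
    simp only [Matrix.cons_val_zero, Matrix.cons_val_one] at hb0 hb1
    intro i j hij
    refine (hentry i j).trans ?_
    fin_cases j
    · simp only [Fin.zero_eta, Matrix.cons_val_zero]
      rw [hc1, Matrix.mulVec_smul, hb0]
      have : i ≠ 0 := by rintro rfl; exact absurd hij (by decide)
      simp [this]
    · change (((p⁻¹ : Matrix.GeneralLinearGroup (Fin 3) ℂ) : Matrix _ _ ℂ).mulVec (M.mulVec v2)) i = 0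
      rw [ha', Matrix.mulVec_add, Matrix.mulVec_smul, Matrix.mulVec_smul, hb0, hb1]
      have h0 : i ≠ 0 := by rintro rfl; exact absurd hij (by decide)
      have h1 : i ≠ 1 := by rintro rfl; exact absurd hij (by decide)
      simp [h0, h1]
    · exfalso; revert hij; fin_cases i <;> decide
end

section
/- Let a, x, w, z be nonzero complex numbers with |a| < 1, let θ ∈ ℝ, and let y, u ∈ ℂ with |y| + |u| ≠ 0. Let γ₁ be the diagonal matrix diag(a·e^{2πiθ}, a, a⁻²·e^{−2πiθ}) and let γ₂ be the matrix with rows (x, 0, y), (0, z, u), (0, 0, w). Then the subgroup of GL(3,ℂ) generated by γ₁ and γ₂ is not discrete. -/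
open Filter Topology

/-- Upper triangular matrix as a unit, with free last column. -/
noncomputable def auxF (x z w : ℂ) (hx : x ≠ 0) (hz : z ≠ 0) (hw : w ≠ 0) (v : ℂ × ℂ) :
    Matrix.GeneralLinearGroup (Fin 3) ℂ where
  val := !![x, 0, v.1; 0, z, v.2; 0, 0, w]
  inv := !![x⁻¹, 0, -(x⁻¹ * v.1 * w⁻¹); 0, z⁻¹, -(z⁻¹ * v.2 * w⁻¹); 0, 0, w⁻¹]
  val_inv := by
    ext i j
    fin_cases i <;> fin_cases j <;> simp [Matrix.mul_apply, Fin.sum_univ_three] <;> field_simp <;> ring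
  inv_val := by
    ext i j
    fin_cases i <;> fin_cases j <;> simp [Matrix.mul_apply, Fin.sum_univ_three] <;> field_simp <;> ring

lemma auxF_cont (x z w : ℂ) (hx : x ≠ 0) (hz : z ≠ 0) (hw : w ≠ 0) :
    Continuous (auxF x z w hx hz hw) := by
  rw [Units.continuous_iff]
  constructor
  · refine continuous_matrix fun i j => ?_
    fin_cases i <;> fin_cases j <;> simp [auxF] <;> fun_prop
  · refine continuous_matrix fun i j => ?_
    fin_cases i <;> fin_cases j <;> simp [auxF] <;> fun_prop

lemma aux_main (x z w : ℂ) (hx : x ≠ 0) (hz : z ≠ 0) (hw : w ≠ 0) (y u : ℂ)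
    (l1 l2 l3 p q : ℂ) (h1 : l1 = p * l3) (h2 : l2 = q * l3)
    (hp0 : p ≠ 0) (hq0 : q ≠ 0) (hp : ‖p‖ < 1) (hq : ‖q‖ < 1) (hyu : y ≠ 0 ∨ u ≠ 0)
    (γ₁ γ₂ : Matrix.GeneralLinearGroup (Fin 3) ℂ)
    (hγ₁ : (γ₁ : Matrix (Fin 3) (Fin 3) ℂ) = Matrix.diagonal ![l1, l2, l3])
    (hγ₂ : (γ₂ : Matrix (Fin 3) (Fin 3) ℂ) = !![x, 0, y; 0, z, u; 0, 0, w]) :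
    ¬ DiscreteTopology
        (Subgroup.closure {γ₁, γ₂} : Subgroup (Matrix.GeneralLinearGroup (Fin 3) ℂ)) := by
  intro hd
  set Γ := Subgroup.closure {γ₁, γ₂} with hΓ
  have m1 : γ₁ ∈ Γ := Subgroup.subset_closure (by simp)
  have m2 : γ₂ ∈ Γ := Subgroup.subset_closure (by simp)
  have step : ∀ s t : ℂ, auxF x z w hx hz hw (p * s, q * t)
      = γ₁ * auxF x z w hx hz hw (s, t) * γ₁⁻¹ := by
    intro s t
    rw [eq_mul_inv_iff_mul_eq]
    apply Units.ext
    rw [Units.val_mul, Units.val_mul, hγ₁]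
    ext i j
    fin_cases i <;> fin_cases j <;>
      simp [auxF, Matrix.mul_apply, Fin.sum_univ_three, Matrix.diagonal, h1, h2] <;> ring
  let g : ℕ → Matrix.GeneralLinearGroup (Fin 3) ℂ := fun n =>
    auxF x z w hx hz hw (p ^ n * y, q ^ n * u)
  have gm : ∀ n, g n ∈ Γ := by
    intro n
    induction n with
    | zero =>
      have : g 0 = γ₂ := by
        apply Units.ext
        rw [hγ₂]
        simp [g, auxF]
      rw [this]; exact m2
    | succ n ih =>
      have : g (n + 1) = γ₁ * g n * γ₁⁻¹ := by
        rw [← step]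
        simp only [g, pow_succ']
        simp only [mul_assoc]
      rw [this]
      exact Γ.mul_mem (Γ.mul_mem m1 ih) (Γ.inv_mem m1)
  have gt : Tendsto g atTop (𝓝 (auxF x z w hx hz hw (0, 0))) := by
    refine ((auxF_cont x z w hx hz hw).tendsto (0, 0)).comp ?_
    refine Tendsto.prodMk_nhds ?_ ?_
    · simpa using (tendsto_pow_atTop_nhds_zero_of_norm_lt_one hp).mul_const y
    · simpa using (tendsto_pow_atTop_nhds_zero_of_norm_lt_one hq).mul_const u
  have ht : Tendsto (fun n => g n * (g (n + 1))⁻¹) atTop (𝓝 1) := by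
    have := gt.mul ((gt.comp (tendsto_add_atTop_nat 1)).inv)
    simpa using this
  let h : ℕ → Γ := fun n => ⟨g n * (g (n + 1))⁻¹, Γ.mul_mem (gm n) (Γ.inv_mem (gm (n + 1)))⟩
  have hh : Tendsto h atTop (𝓝 1) := by
    rw [tendsto_subtype_rng]
    exact ht
  rw [nhds_discrete, tendsto_pure] at hh
  obtain ⟨n, hn⟩ := hh.exists
  have e : g n = g (n + 1) := by
    have := congrArg Subtype.val hn
    exact mul_inv_eq_one.mp this
  have ev := congrArg Units.val e
  have e1 : p ^ n * y = p ^ (n + 1) * y := by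
    simpa [g, auxF] using congrFun (congrFun ev 0) 2
  have e2 : q ^ n * u = q ^ (n + 1) * u := by
    simpa [g, auxF] using congrFun (congrFun ev 1) 2
  have key : ∀ r v : ℂ, r ≠ 0 → ‖r‖ < 1 → r ^ n * v = r ^ (n + 1) * v → v = 0 := by
    intro r v hr0 hr hv
    by_contra hv0
    have h3 := mul_right_cancel₀ hv0 hv
    rw [pow_succ] at h3
    have h4 : r = 1 := (mul_left_cancel₀ (pow_ne_zero n hr0) (by rw [mul_one]; exact h3)).symm
    rw [h4] at hr
    simp at hr
  rcases hyu with hy | hu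
  · exact hy (key p y hp0 hp e1)
  · exact hu (key q u hq0 hq e2)

/-- Let `a, x, w, z` be nonzero complex numbers with `|a| < 1`, `θ ∈ ℝ`, and `y, u ∈ ℂ` with
`|y| + |u| ≠ 0`.  Let `γ₁ = diag(a·e^{2πiθ}, a, a⁻²·e^{−2πiθ})` and let `γ₂` have rows
`(x, 0, y)`, `(0, z, u)`, `(0, 0, w)`.  Then the subgroup of `GL(3, ℂ)` generated by
`γ₁` and `γ₂` is not discrete. -/
theorem stmt_1 (a x w z : ℂ) (θ : ℝ) (y u : ℂ)
    (ha : a ≠ 0) (hx : x ≠ 0) (hw : w ≠ 0) (hz : z ≠ 0)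
    (ha1 : ‖a‖ < 1) (hyu : ‖y‖ + ‖u‖ ≠ 0)
    (γ₁ γ₂ : Matrix.GeneralLinearGroup (Fin 3) ℂ)
    (hγ₁ : (γ₁ : Matrix (Fin 3) (Fin 3) ℂ) =
      Matrix.diagonal
        ![a * Complex.exp (2 * (Real.pi : ℂ) * Complex.I * (θ : ℂ)), a,
          a⁻¹ ^ 2 * Complex.exp (-(2 * (Real.pi : ℂ) * Complex.I * (θ : ℂ)))])
    (hγ₂ : (γ₂ : Matrix (Fin 3) (Fin 3) ℂ) = !![x, 0, y; 0, z, u; 0, 0, w]) :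
    ¬ DiscreteTopology
        (Subgroup.closure {γ₁, γ₂} : Subgroup (Matrix.GeneralLinearGroup (Fin 3) ℂ)) := by
  have hE : ‖Complex.exp (2 * (Real.pi : ℂ) * Complex.I * (θ : ℂ))‖ = 1 := by
    have : (2 * (Real.pi : ℂ) * Complex.I * (θ : ℂ)) = ((2 * Real.pi * θ : ℝ) : ℂ) * Complex.I := by
      push_cast; ring
    rw [this, Complex.norm_exp_ofReal_mul_I]
  rw [Complex.exp_neg] at hγ₁
  have hE0 := Complex.exp_ne_zero (2 * (Real.pi : ℂ) * Complex.I * (θ : ℂ))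
  generalize Complex.exp (2 * (Real.pi : ℂ) * Complex.I * (θ : ℂ)) = E at hE hE0 hγ₁
  have h3 : ‖a‖ ^ 3 < 1 := pow_lt_one₀ (norm_nonneg a) ha1 (by norm_num)
  refine aux_main x z w hx hz hw y u _ _ _ (a ^ 3 * E ^ 2) (a ^ 3 * E) ?_ ?_ ?_ ?_ ?_ ?_ ?_
    γ₁ γ₂ hγ₁ hγ₂
  · field_simp
  · field_simp
  · positivity
  · positivity
  · simpa [hE] using h3
  · simpa [hE] using h3
  · by_contra! hc
    apply hyu
    simp [hc.1, hc.2]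
end

section
/- Let λ be a nonzero complex number with |λ| ≠ 1 and let γ = diag(λ⁻², λ, λ). If α ∈ GL(3,ℂ) is upper triangular and at least one of its entries α₁₂, α₁₃ is nonzero (equivalently, α does not leave invariant both the line spanned by e₁ and the plane spanned by e₂, e₃), then the subgroup of GL(3,ℂ) generated by α and γ is not discrete. -/
/-- The unipotent matrix with first row `1, p, q`. -/
def Uni (p q : ℂ) : Matrix.GeneralLinearGroup (Fin 3) ℂ where
  val := !![1, p, q; 0, 1, 0; 0, 0, 1]
  inv := !![1, -p, -q; 0, 1, 0; 0, 0, 1]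
  val_inv := by
    ext i j; fin_cases i <;> fin_cases j <;> simp [Matrix.mul_apply, Fin.sum_univ_three]
  inv_val := by
    ext i j; fin_cases i <;> fin_cases j <;> simp [Matrix.mul_apply, Fin.sum_univ_three]

theorem Uni_cont (p q : ℂ) : Continuous (fun t : ℂ => Uni (t * p) (t * q)) := by
  rw [Units.continuous_iff]
  constructor
  · refine continuous_matrix fun i j => ?_
    fin_cases i <;> fin_cases j <;> simp [Uni] <;> fun_prop
  · refine continuous_matrix fun i j => ?_
    fin_cases i <;> fin_cases j <;> simp [Uni] <;> fun_prop

theorem Uni_ne (p q : ℂ) (h : p ≠ 0 ∨ q ≠ 0) : Uni p q ≠ 1 := by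
  intro e
  have e' := congrArg (fun g : Matrix.GeneralLinearGroup (Fin 3) ℂ =>
    (g : Matrix (Fin 3) (Fin 3) ℂ)) e
  have h1 := congrFun (congrFun e' 0) 1
  have h2 := congrFun (congrFun e' 0) 2
  simp [Uni] at h1 h2
  tauto

theorem Uni_one : Uni 0 0 = 1 := by
  ext i j; fin_cases i <;> fin_cases j <;> simp [Uni]

theorem core (Γ : Subgroup (Matrix.GeneralLinearGroup (Fin 3) ℂ))
    (δ : Matrix.GeneralLinearGroup (Fin 3) ℂ) (hδ : δ ∈ Γ) (ν : ℂ) (h0 : ν ≠ 0) (h1 : ‖ν‖ < 1)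
    (hc : ∀ p q, δ * Uni p q = Uni (ν * p) (ν * q) * δ)
    (p q : ℂ) (hpq : p ≠ 0 ∨ q ≠ 0) (hU : Uni p q ∈ Γ) : ¬ DiscreteTopology Γ := by
  intro hd
  have hm : ∀ n : ℕ, Uni (ν ^ n * p) (ν ^ n * q) ∈ Γ := by
    intro n
    induction n with
    | zero => simpa using hU
    | succ n ih =>
      have : Uni (ν ^ (n+1) * p) (ν ^ (n+1) * q) = δ * Uni (ν ^ n * p) (ν ^ n * q) * δ⁻¹ := by
        rw [hc, mul_inv_cancel_right]; ring_nf
      rw [this]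
      exact Γ.mul_mem (Γ.mul_mem hδ ih) (Γ.inv_mem hδ)
  have ht : Filter.Tendsto (fun n : ℕ => Uni (ν ^ n * p) (ν ^ n * q)) Filter.atTop (nhds 1) := by
    have := (Uni_cont p q).tendsto 0
    simp only [zero_mul, Uni_one] at this
    exact this.comp (tendsto_pow_atTop_nhds_zero_of_norm_lt_one h1)
  have ht2 : Filter.Tendsto (fun n : ℕ => (⟨_, hm n⟩ : Γ)) Filter.atTop (nhds 1) := by
    rw [tendsto_subtype_rng]; exact ht
  rw [nhds_discrete, Filter.tendsto_pure] at ht2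
  obtain ⟨n, hn⟩ := ht2.exists
  refine Uni_ne (ν ^ n * p) (ν ^ n * q) ?_ (congrArg Subtype.val hn)
  have := pow_ne_zero n h0
  simpa [h0] using hpq


/-- Let `λ ≠ 0` with `|λ| ≠ 1` and `γ = diag(λ⁻², λ, λ)`.  If `α ∈ GL(3, ℂ)` is upper
triangular and at least one of `α₁₂`, `α₁₃` is nonzero, then the subgroup generated by
`α` and `γ` is not discrete. -/
theorem stmt_2 (lam : ℂ) (hlam : lam ≠ 0) (habs : ‖lam‖ ≠ 1)
    (γ α : Matrix.GeneralLinearGroup (Fin 3) ℂ)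
    (hγ : (γ : Matrix (Fin 3) (Fin 3) ℂ) = Matrix.diagonal ![lam⁻¹ ^ 2, lam, lam])
    (hupper : ∀ i j : Fin 3, j < i → (α : Matrix (Fin 3) (Fin 3) ℂ) i j = 0)
    (hα : (α : Matrix (Fin 3) (Fin 3) ℂ) 0 1 ≠ 0 ∨ (α : Matrix (Fin 3) (Fin 3) ℂ) 0 2 ≠ 0) :
    ¬ DiscreteTopology
        (Subgroup.closure {α, γ} : Subgroup (Matrix.GeneralLinearGroup (Fin 3) ℂ)) := by
  have hγm : γ ∈ Subgroup.closure {α, γ} := Subgroup.subset_closure (by simp)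
  have hαm : α ∈ Subgroup.closure {α, γ} := Subgroup.subset_closure (by simp)
  have h10 := hupper 1 0 (by decide)
  have h20 := hupper 2 0 (by decide)
  have h21 := hupper 2 1 (by decide)
  have ha : (α : Matrix (Fin 3) (Fin 3) ℂ) 0 0 ≠ 0 := by
    intro h
    have hd : (α : Matrix (Fin 3) (Fin 3) ℂ).det ≠ 0 :=
      ((Matrix.isUnit_iff_isUnit_det _).1 α.isUnit).ne_zero
    apply hd
    rw [Matrix.det_fin_three, h, h10, h20]; ring
  have hc : ∀ p q, γ * Uni p q = Uni ((lam⁻¹)^3 * p) ((lam⁻¹)^3 * q) * γ := by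
    intro p q
    apply Units.ext
    rw [Units.val_mul, Units.val_mul, hγ]
    ext i j
    fin_cases i <;> fin_cases j <;> simp [Uni, Matrix.mul_apply, Fin.sum_univ_three]
    all_goals field_simp
  have hc' : ∀ p q, γ⁻¹ * Uni p q = Uni (lam^3 * p) (lam^3 * q) * γ⁻¹ := by
    intro p q
    rw [inv_mul_eq_iff_eq_mul, ← mul_assoc, hc, mul_inv_cancel_right, ← mul_assoc, ← mul_assoc,
      ← mul_pow, inv_mul_cancel₀ hlam]
    simp
  have hμ : (lam⁻¹)^3 - 1 ≠ 0 := by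
    intro h
    have h2 : ‖lam⁻¹‖ ^ 3 = 1 := by rw [← norm_pow, sub_eq_zero.1 h, norm_one]
    rw [pow_eq_one_iff_of_nonneg (norm_nonneg _) (by norm_num), norm_inv, inv_eq_one] at h2
    exact habs h2
  set a := (α : Matrix (Fin 3) (Fin 3) ℂ) 0 0 with hadef
  set v := (α : Matrix (Fin 3) (Fin 3) ℂ) 0 1 with hv
  set w := (α : Matrix (Fin 3) (Fin 3) ℂ) 0 2 with hw
  have key : γ * α = α * Uni (((lam⁻¹)^3 - 1) * v / a) (((lam⁻¹)^3 - 1) * w / a) * γ := by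
    apply Units.ext
    rw [Units.val_mul, Units.val_mul, Units.val_mul, hγ]
    ext i j
    fin_cases i <;> fin_cases j <;>
      simp [Uni, Matrix.mul_apply, Fin.sum_univ_three, h10, h20, h21, ← hadef, ← hv, ← hw]
    all_goals field_simp
    all_goals ring
  have hU : Uni (((lam⁻¹)^3 - 1) * v / a) (((lam⁻¹)^3 - 1) * w / a)
      ∈ Subgroup.closure {α, γ} := by
    have : Uni (((lam⁻¹)^3 - 1) * v / a) (((lam⁻¹)^3 - 1) * w / a) = α⁻¹ * (γ * α) * γ⁻¹ := by
      rw [key]; group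
    rw [this]
    exact mul_mem (mul_mem (inv_mem hαm) (mul_mem hγm hαm)) (inv_mem hγm)
  have hne : ((lam⁻¹)^3 - 1) * v / a ≠ 0 ∨ ((lam⁻¹)^3 - 1) * w / a ≠ 0 :=
    hα.imp (fun h => div_ne_zero (mul_ne_zero hμ h) ha)
      (fun h => div_ne_zero (mul_ne_zero hμ h) ha)
  rcases lt_or_gt_of_ne habs with h | h
  · refine core _ γ⁻¹ (inv_mem hγm) (lam^3) (pow_ne_zero _ hlam) ?_ hc' _ _ hne hU
    rw [norm_pow]
    exact pow_lt_one₀ (norm_nonneg _) h (by norm_num)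
  · refine core _ γ hγm ((lam⁻¹)^3) (pow_ne_zero _ (inv_ne_zero hlam)) ?_ hc _ _ hne hU
    rw [norm_pow, norm_inv]
    exact pow_lt_one₀ (inv_nonneg.2 (norm_nonneg _)) (inv_lt_one_of_one_lt₀ h) (by norm_num)
end

section
/- Let λ be a nonzero complex number with |λ| ≠ 1. If Γ ≤ GL(3,ℂ) is a discrete subgroup all of whose elements are upper triangular and which contains the complex homothety diag(λ⁻², λ, λ), then every element α ∈ Γ satisfies α₁₂ = 0 and α₁₃ = 0. -/
/-- unipotent element -/
def uni (x y : ℂ) : Matrix.GeneralLinearGroup (Fin 3) ℂ where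
  val := !![1, x, y; 0, 1, 0; 0, 0, 1]
  inv := !![1, -x, -y; 0, 1, 0; 0, 0, 1]
  val_inv := by
    ext i j; fin_cases i <;> fin_cases j <;> simp [Matrix.mul_apply, Fin.sum_univ_three]
  inv_val := by
    ext i j; fin_cases i <;> fin_cases j <;> simp [Matrix.mul_apply, Fin.sum_univ_three]

theorem uni_val (x y : ℂ) : (uni x y : Matrix (Fin 3) (Fin 3) ℂ) = !![1, x, y; 0, 1, 0; 0, 0, 1] :=
  rfl

theorem uni_zero : uni 0 0 = 1 := by
  ext i j; fin_cases i <;> fin_cases j <;> simp [uni_val]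

theorem uni_cont : Continuous (fun p : ℂ × ℂ => uni p.1 p.2) := by
  rw [Units.continuous_iff]
  constructor
  · refine continuous_matrix fun i j => ?_
    fin_cases i <;> fin_cases j <;> simp [uni] <;> fun_prop
  · refine continuous_matrix fun i j => ?_
    fin_cases i <;> fin_cases j <;> simp [uni] <;> fun_prop

theorem uni_trivial (Γ : Subgroup (Matrix.GeneralLinearGroup (Fin 3) ℂ))
    (hdisc : DiscreteTopology Γ) (c : ℂ) (hc : c ≠ 0) (hc1 : ‖c‖ < 1)
    (hstep : ∀ x y, uni x y ∈ Γ → uni (c * x) (c * y) ∈ Γ) (x y : ℂ) (h : uni x y ∈ Γ) :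
    x = 0 ∧ y = 0 := by
  have hmem : ∀ n : ℕ, uni (c ^ n * x) (c ^ n * y) ∈ Γ := by
    intro n
    induction n with
    | zero => simpa using h
    | succ k ih =>
      have := hstep _ _ ih
      rw [← mul_assoc, ← mul_assoc, ← pow_succ'] at this
      exact this
  have ht := tendsto_pow_atTop_nhds_zero_of_norm_lt_one hc1
  have h2 : Filter.Tendsto (fun n : ℕ => ((c ^ n * x, c ^ n * y) : ℂ × ℂ)) Filter.atTop
      (nhds (0, 0)) := by
    refine Filter.Tendsto.prodMk_nhds ?_ ?_
    · simpa using ht.mul_const x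
    · simpa using ht.mul_const y
  have h3 := (uni_cont.tendsto (0, 0)).comp h2
  have h4 : Filter.Tendsto (fun n : ℕ => (⟨_, hmem n⟩ : Γ)) Filter.atTop (nhds 1) := by
    rw [tendsto_subtype_rng]
    simpa [uni_zero, Function.comp_def] using h3
  rw [nhds_discrete, Filter.tendsto_pure] at h4
  obtain ⟨n, hn⟩ := h4.exists
  have h5 := congrArg (fun z : Γ => ((z : Matrix.GeneralLinearGroup (Fin 3) ℂ) :
    Matrix (Fin 3) (Fin 3) ℂ)) hn
  have e1 := congrFun (congrFun h5 0) 1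
  have e2 := congrFun (congrFun h5 0) 2
  simp [uni_val, hc] at e1 e2
  exact ⟨e1, e2⟩

theorem main_aux (a b : ℂ) (ha : a ≠ 0) (hb : b ≠ 0) (hab : ‖a / b‖ < 1)
    (Γ : Subgroup (Matrix.GeneralLinearGroup (Fin 3) ℂ)) (hdisc : DiscreteTopology Γ)
    (hupper : ∀ γ ∈ Γ, ∀ i j : Fin 3, j < i → (γ : Matrix (Fin 3) (Fin 3) ℂ) i j = 0)
    (γ : Matrix.GeneralLinearGroup (Fin 3) ℂ) (hγ : γ ∈ Γ)
    (hγe : (γ : Matrix (Fin 3) (Fin 3) ℂ) = Matrix.diagonal ![a, b, b]) :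
    ∀ α ∈ Γ, (α : Matrix (Fin 3) (Fin 3) ℂ) 0 1 = 0 ∧
      (α : Matrix (Fin 3) (Fin 3) ℂ) 0 2 = 0 := by
  intro α hα
  have key := uni_trivial Γ hdisc (a / b) (div_ne_zero ha hb) hab (by
    intro x y h
    have : uni (a / b * x) (a / b * y) = γ * uni x y * γ⁻¹ := by
      rw [eq_mul_inv_iff_mul_eq]
      ext i j
      rw [Units.val_mul, Units.val_mul, hγe, uni_val, uni_val, Matrix.mul_diagonal,
        Matrix.diagonal_mul]
      fin_cases i <;> fin_cases j <;> simp <;> field_simp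
    rw [this]
    exact Γ.mul_mem (Γ.mul_mem hγ h) (Γ.inv_mem hγ))
  have h10 := hupper α hα 1 0 (by decide)
  have h20 := hupper α hα 2 0 (by decide)
  have h21 := hupper α hα 2 1 (by decide)
  have hdet : (α : Matrix (Fin 3) (Fin 3) ℂ).det ≠ 0 :=
    ((Matrix.isUnit_iff_isUnit_det _).1 α.isUnit).ne_zero
  rw [Matrix.det_fin_three, h10, h20, h21] at hdet
  have hq : (α : Matrix (Fin 3) (Fin 3) ℂ) 1 1 ≠ 0 := by
    intro h; apply hdet; rw [h]; ring
  have hs : (α : Matrix (Fin 3) (Fin 3) ℂ) 2 2 ≠ 0 := by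
    intro h; apply hdet; rw [h]; ring
  have hk : (b - a) / b ≠ 0 := by
    refine div_ne_zero (fun h => ?_) hb
    rw [sub_eq_zero] at h
    rw [h, div_self ha] at hab
    simp at hab
  obtain ⟨x, hx⟩ : ∃ x, x * (α : Matrix (Fin 3) (Fin 3) ℂ) 1 1
      = (b - a) / b * (α : Matrix (Fin 3) (Fin 3) ℂ) 0 1 := ⟨_, div_mul_cancel₀ _ hq⟩
  obtain ⟨y, hy⟩ : ∃ y, y * (α : Matrix (Fin 3) (Fin 3) ℂ) 2 2
      = (b - a) / b * (α : Matrix (Fin 3) (Fin 3) ℂ) 0 2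
        - x * (α : Matrix (Fin 3) (Fin 3) ℂ) 1 2 := ⟨_, div_mul_cancel₀ _ hs⟩
  have hu : uni x y = α * γ * (γ * α)⁻¹ := by
    rw [eq_mul_inv_iff_mul_eq]
    ext i j
    rw [Units.val_mul, Units.val_mul, Units.val_mul, hγe, uni_val, Matrix.mul_diagonal,
      Matrix.mul_apply, Fin.sum_univ_three, Matrix.diagonal_mul, Matrix.diagonal_mul,
      Matrix.diagonal_mul]
    field_simp at hx hy
    fin_cases i <;> fin_cases j <;> simp [h10, h20, h21] <;> grind
  obtain ⟨hx0, hy0⟩ := key x y (by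
    rw [hu]
    exact Γ.mul_mem (Γ.mul_mem hα hγ) (Γ.inv_mem (Γ.mul_mem hγ hα)))
  subst hx0 hy0
  rw [zero_mul] at hx hy
  rw [zero_mul, sub_zero] at hy
  exact ⟨(mul_eq_zero.1 hx.symm).resolve_left hk, (mul_eq_zero.1 hy.symm).resolve_left hk⟩

/-- If `Γ ≤ GL(3, ℂ)` is a discrete subgroup all of whose elements are upper triangular
and which contains the complex homothety `diag(λ⁻², λ, λ)` with `|λ| ≠ 1`, then every
`α ∈ Γ` satisfies `α₁₂ = 0` and `α₁₃ = 0`. -/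
theorem stmt_3 (lam : ℂ) (hlam : lam ≠ 0) (habs : ‖lam‖ ≠ 1)
    (Γ : Subgroup (Matrix.GeneralLinearGroup (Fin 3) ℂ)) (hdisc : DiscreteTopology Γ)
    (hupper : ∀ γ ∈ Γ, ∀ i j : Fin 3, j < i → (γ : Matrix (Fin 3) (Fin 3) ℂ) i j = 0)
    (hhom : ∃ γ ∈ Γ, (γ : Matrix (Fin 3) (Fin 3) ℂ) = Matrix.diagonal ![lam⁻¹ ^ 2, lam, lam]) :
    ∀ α ∈ Γ, (α : Matrix (Fin 3) (Fin 3) ℂ) 0 1 = 0 ∧ (α : Matrix (Fin 3) (Fin 3) ℂ) 0 2 = 0 := by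
  obtain ⟨γ, hγ, hγe⟩ := hhom
  rcases lt_or_gt_of_ne habs with h | h
  · refine main_aux (lam ^ 2) lam⁻¹ (by simpa) (by simpa) ?_ Γ hdisc hupper γ⁻¹ (Γ.inv_mem hγ) ?_
    · have : lam ^ 2 / lam⁻¹ = lam ^ 3 := by field_simp
      rw [this, norm_pow]
      exact pow_lt_one₀ (norm_nonneg _) h (by norm_num)
    · rw [Matrix.coe_units_inv, hγe]
      apply Matrix.inv_eq_left_inv
      rw [Matrix.diagonal_mul_diagonal, ← Matrix.diagonal_one]
      congr 1
      ext i
      fin_cases i <;> simp [hlam]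
  · refine main_aux (lam⁻¹ ^ 2) lam (by simpa) hlam ?_ Γ hdisc hupper γ hγ hγe
    have : lam⁻¹ ^ 2 / lam = lam⁻¹ ^ 3 := by field_simp
    rw [this, norm_pow, norm_inv]
    exact pow_lt_one₀ (by positivity) (inv_lt_one_of_one_lt₀ h) (by norm_num)
end

section
/- Let β be a nonzero complex number with |β| ≠ 1, let θ be an irrational real number, and let γ be the irrational screw diag(β⁻², β·e^{4πiθ}, β·e^{2πiθ}). If α ∈ GL(3,ℂ) is upper triangular and the subgroup of GL(3,ℂ) generated by α and γ is discrete, then α is diagonal. -/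
theorem aux_conj (δ : Matrix.GeneralLinearGroup (Fin 3) ℂ) (d : Fin 3 → ℂ) (hd0 : ∀ i, d i ≠ 0)
    (hδ : (δ : Matrix (Fin 3) (Fin 3) ℂ) = Matrix.diagonal d)
    (a : Matrix.GeneralLinearGroup (Fin 3) ℂ) (n : ℕ) (i j : Fin 3) :
    ((δ ^ n * a * (δ ^ n)⁻¹ : Matrix.GeneralLinearGroup (Fin 3) ℂ) : Matrix (Fin 3) (Fin 3) ℂ) i j
      = (d i / d j) ^ n * (a : Matrix (Fin 3) (Fin 3) ℂ) i j := by
  have h1 : δ ^ n * a * (δ ^ n)⁻¹ * δ ^ n = δ ^ n * a := by group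
  have h2 := congrArg
    (fun g : Matrix.GeneralLinearGroup (Fin 3) ℂ => (g : Matrix (Fin 3) (Fin 3) ℂ) i j) h1
  simp only [Units.val_mul, Units.val_pow_eq_pow_val, hδ, Matrix.diagonal_pow,
    Matrix.mul_diagonal, Matrix.diagonal_mul, Pi.pow_apply] at h2 ⊢
  have := pow_ne_zero n (hd0 j)
  rw [div_pow, div_mul_eq_mul_div, eq_div_iff this]
  exact h2

theorem aux_main_s4 (δ α : Matrix.GeneralLinearGroup (Fin 3) ℂ) (d : Fin 3 → ℂ)
    (hd0 : ∀ i, d i ≠ 0)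
    (hδ : (δ : Matrix (Fin 3) (Fin 3) ℂ) = Matrix.diagonal d)
    (hle : ∀ i j, i < j → ‖d i‖ ≤ ‖d j‖)
    (hne : ∀ i j, i < j → ∀ n : ℕ, n ≠ 0 → d i ^ n ≠ d j ^ n)
    (hupper : ∀ i j : Fin 3, j < i → (α : Matrix (Fin 3) (Fin 3) ℂ) i j = 0)
    (H : Subgroup (Matrix.GeneralLinearGroup (Fin 3) ℂ)) (hdisc : DiscreteTopology H)
    (hα : α ∈ H) (hδH : δ ∈ H) :
    ∀ i j : Fin 3, i ≠ j → (α : Matrix (Fin 3) (Fin 3) ℂ) i j = 0 := by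
  have hup' : ∀ i j : Fin 3, j < i →
      ((α⁻¹ : Matrix.GeneralLinearGroup (Fin 3) ℂ) : Matrix (Fin 3) (Fin 3) ℂ) i j = 0 := by
    have hb : Matrix.BlockTriangular (α : Matrix (Fin 3) (Fin 3) ℂ) id :=
      fun i j h => hupper i j h
    let _ : Invertible (α : Matrix (Fin 3) (Fin 3) ℂ) := α.invertible
    have := Matrix.blockTriangular_inv_of_blockTriangular hb
    intro i j h
    rw [Matrix.coe_units_inv]
    exact this h
  have hbd : ∀ a : Matrix.GeneralLinearGroup (Fin 3) ℂ,
      (∀ i j : Fin 3, j < i → (a : Matrix (Fin 3) (Fin 3) ℂ) i j = 0) → ∀ (n : ℕ) (i j : Fin 3),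
      ((δ ^ n * a * (δ ^ n)⁻¹ : Matrix.GeneralLinearGroup (Fin 3) ℂ) : Matrix (Fin 3) (Fin 3) ℂ) i j
        ∈ Metric.closedBall (0 : ℂ) ‖(a : Matrix (Fin 3) (Fin 3) ℂ) i j‖ := by
    intro a ha n i j
    rw [aux_conj δ d hd0 hδ, mem_closedBall_zero_iff, norm_mul, norm_pow, norm_div]
    rcases lt_trichotomy i j with h | h | h
    · refine mul_le_of_le_one_left (norm_nonneg _) (pow_le_one₀ (by positivity) ?_)
      exact div_le_one_of_le₀ (hle i j h) (norm_nonneg _)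
    · subst h
      rw [div_self (norm_ne_zero_iff.2 (hd0 i))]; simp
    · simp [ha i j h]
  let B : Matrix.GeneralLinearGroup (Fin 3) ℂ → Set (Matrix (Fin 3) (Fin 3) ℂ) := fun a =>
    Set.pi Set.univ fun i => Set.pi Set.univ fun j =>
      Metric.closedBall (0 : ℂ) ‖(a : Matrix (Fin 3) (Fin 3) ℂ) i j‖
  have hB : ∀ a, IsCompact (B a) := fun a =>
    isCompact_univ_pi fun i => isCompact_univ_pi fun j => isCompact_closedBall _ _
  let K : Set (Matrix.GeneralLinearGroup (Fin 3) ℂ) :=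
    Units.embedProduct (Matrix (Fin 3) (Fin 3) ℂ) ⁻¹' (B α ×ˢ (MulOpposite.unop ⁻¹' B α⁻¹))
  have hK : IsCompact K := by
    refine Units.isClosedEmbedding_embedProduct.isCompact_preimage ((hB α).prod ?_)
    exact MulOpposite.opHomeomorph.symm.isClosedEmbedding.isCompact_preimage (hB α⁻¹)
  have hHc : IsClosed (H : Set (Matrix.GeneralLinearGroup (Fin 3) ℂ)) :=
    Subgroup.isClosed_of_discrete
  have hfin : (K ∩ (H : Set (Matrix.GeneralLinearGroup (Fin 3) ℂ))).Finite := by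
    refine (hK.inter_right hHc).finite ?_
    exact IsDiscrete.mono ⟨hdisc⟩ Set.inter_subset_right
  have hmem : ∀ n : ℕ, δ ^ n * α * (δ ^ n)⁻¹ ∈
      K ∩ (H : Set (Matrix.GeneralLinearGroup (Fin 3) ℂ)) := by
    intro n
    refine ⟨⟨fun i _ j _ => hbd α hupper n i j, ?_⟩,
      H.mul_mem (H.mul_mem (H.pow_mem hδH n) hα) (H.inv_mem (H.pow_mem hδH n))⟩
    have : (δ ^ n * α * (δ ^ n)⁻¹)⁻¹ = δ ^ n * α⁻¹ * (δ ^ n)⁻¹ := by group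
    intro i _ j _
    have h3 := hbd α⁻¹ hup' n i j
    rw [← this] at h3
    exact h3
  obtain ⟨n, m, hnm, he⟩ : ∃ n m : ℕ, n < m ∧ δ ^ n * α * (δ ^ n)⁻¹ = δ ^ m * α * (δ ^ m)⁻¹ := by
    obtain ⟨n, -, m, -, h, he⟩ := Set.infinite_univ.exists_lt_map_eq_of_mapsTo
      (f := fun n : ℕ => δ ^ n * α * (δ ^ n)⁻¹) (fun n _ => hmem n) hfin
    exact ⟨n, m, h, he⟩
  intro i j hij
  rcases lt_or_gt_of_ne hij with h | h
  · have h2 := congrArg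
      (fun g : Matrix.GeneralLinearGroup (Fin 3) ℂ => (g : Matrix (Fin 3) (Fin 3) ℂ) i j) he
    simp only [aux_conj δ d hd0 hδ] at h2
    by_contra h0
    have h4 := mul_right_cancel₀ h0 h2
    obtain ⟨k, rfl⟩ := Nat.exists_eq_add_of_lt hnm
    have hq : d i / d j ≠ 0 := div_ne_zero (hd0 i) (hd0 j)
    rw [add_assoc, pow_add] at h4
    have h5 : (d i / d j) ^ (k + 1) = 1 :=
      (mul_left_cancel₀ (pow_ne_zero n hq) (by rw [mul_one]; exact h4)).symm
    rw [div_pow, div_eq_one_iff_eq (pow_ne_zero _ (hd0 j))] at h5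
    exact hne i j h (k + 1) (Nat.succ_ne_zero k) h5
  · exact hupper i j h

theorem aux_exp (θ : ℝ) (hθ : Irrational θ) (n : ℕ) (hn : n ≠ 0) :
    Complex.exp (2 * (Real.pi : ℂ) * Complex.I * (θ : ℂ)) ^ n ≠ 1 := by
  rw [← Complex.exp_nat_mul]
  intro h
  obtain ⟨k, hk⟩ := Complex.exp_eq_one_iff.1 h
  have h2 : (2 * (Real.pi : ℂ) * Complex.I) ≠ 0 := Complex.two_pi_I_ne_zero
  have h3 : ((n : ℂ) * θ) = k := mul_right_cancel₀ h2 (by rw [← hk]; ring)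
  have h4 : (n : ℝ) * θ = k := by exact_mod_cast h3
  exact (hθ.natCast_mul hn).ne_int k h4

theorem aux_norm (θ : ℝ) (r : ℝ) :
    ‖Complex.exp (r * (Real.pi : ℂ) * Complex.I * (θ : ℂ))‖ = 1 := by
  have : (r * (Real.pi : ℂ) * Complex.I * (θ : ℂ)) = ((r * Real.pi * θ : ℝ) : ℂ) * Complex.I := by
    push_cast; ring
  rw [this, Complex.norm_exp_ofReal_mul_I]

/-- Let `γ` be the irrational screw `diag(β⁻², β·e^{4πiθ}, β·e^{2πiθ})` with `|β| ≠ 1`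
and `θ` irrational.  If `α ∈ GL(3, ℂ)` is upper triangular and the subgroup generated by
`α` and `γ` is discrete, then `α` is diagonal. -/
theorem stmt_4 (β : ℂ) (hβ : β ≠ 0) (hβ1 : ‖β‖ ≠ 1) (θ : ℝ) (hθ : Irrational θ)
    (γ α : Matrix.GeneralLinearGroup (Fin 3) ℂ)
    (hγ : (γ : Matrix (Fin 3) (Fin 3) ℂ) =
      Matrix.diagonal
        ![β⁻¹ ^ 2, β * Complex.exp (4 * (Real.pi : ℂ) * Complex.I * (θ : ℂ)),
          β * Complex.exp (2 * (Real.pi : ℂ) * Complex.I * (θ : ℂ))])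
    (hupper : ∀ i j : Fin 3, j < i → (α : Matrix (Fin 3) (Fin 3) ℂ) i j = 0)
    (hdisc : DiscreteTopology
      (Subgroup.closure {α, γ} : Subgroup (Matrix.GeneralLinearGroup (Fin 3) ℂ))) :
    ∀ i j : Fin 3, i ≠ j → (α : Matrix (Fin 3) (Fin 3) ℂ) i j = 0 := by
  have n4 : ‖Complex.exp (4 * (Real.pi : ℂ) * Complex.I * (θ : ℂ))‖ = 1 := by
    simpa using aux_norm θ 4
  have n2 : ‖Complex.exp (2 * (Real.pi : ℂ) * Complex.I * (θ : ℂ))‖ = 1 := by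
    simpa using aux_norm θ 2
  have e42 : Complex.exp (4 * (Real.pi : ℂ) * Complex.I * (θ : ℂ)) =
      Complex.exp (2 * (Real.pi : ℂ) * Complex.I * (θ : ℂ)) *
      Complex.exp (2 * (Real.pi : ℂ) * Complex.I * (θ : ℂ)) := by
    rw [← Complex.exp_add]; congr 1; ring
  have hirr := aux_exp θ hθ
  have he0 := Complex.exp_ne_zero (2 * (Real.pi : ℂ) * Complex.I * (θ : ℂ))
  have he4 := Complex.exp_ne_zero (4 * (Real.pi : ℂ) * Complex.I * (θ : ℂ))
  generalize Complex.exp (4 * (Real.pi : ℂ) * Complex.I * (θ : ℂ)) = f at *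
  generalize Complex.exp (2 * (Real.pi : ℂ) * Complex.I * (θ : ℂ)) = e at *
  have hb : 0 < ‖β‖ := norm_pos_iff.2 hβ
  have hd0 : ∀ i, (![β⁻¹ ^ 2, β * f, β * e] : Fin 3 → ℂ) i ≠ 0 := by
    intro i; fin_cases i <;> simp [hβ, he0, he4]
  have hN : ‖β⁻¹ ^ 2‖ ≠ ‖β‖ := by
    intro h
    rw [norm_pow, norm_inv, inv_pow, inv_eq_iff_eq_inv] at h
    have h := (mul_eq_one_iff_eq_inv₀ hb.ne').2 h
    exact hβ1 ((pow_eq_one_iff_of_nonneg hb.le (n := 3) (by norm_num)).1 (by rw [← h]; ring))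
  have hne : ∀ i j, i < j → ∀ n : ℕ, n ≠ 0 → (![β⁻¹ ^ 2, β * f, β * e] : Fin 3 → ℂ) i ^ n ≠
      (![β⁻¹ ^ 2, β * f, β * e] : Fin 3 → ℂ) j ^ n := by
    have key : ∀ x : ℂ, ‖x‖ = 1 → ∀ n : ℕ, n ≠ 0 → (β⁻¹ ^ 2) ^ n ≠ (β * x) ^ n := by
      intro x hx n hn h
      have h' := congrArg norm h
      rw [norm_pow, norm_pow (β * x), norm_mul, hx, mul_one] at h'
      exact hN ((pow_left_inj₀ (norm_nonneg _) (norm_nonneg _) hn).1 h')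
    have key2 : ∀ n : ℕ, n ≠ 0 → (β * f) ^ n ≠ (β * e) ^ n := by
      intro n hn h
      rw [mul_pow, mul_pow] at h
      have h2 := mul_left_cancel₀ (pow_ne_zero n hβ) h
      rw [e42, mul_pow] at h2
      exact hirr n hn (mul_left_cancel₀ (pow_ne_zero n he0) (by rw [h2, mul_one]))
    intro i j hij n hn
    fin_cases i <;> fin_cases j <;> first
      | exact absurd hij (by decide)
      | exact key f n4 n hn
      | exact key e n2 n hn
      | exact key2 n hn
  have hαH : α ∈ Subgroup.closure {α, γ} := Subgroup.subset_closure (by simp)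
  have hγH : γ ∈ Subgroup.closure {α, γ} := Subgroup.subset_closure (by simp)
  have nf : ‖β * f‖ = ‖β‖ := by rw [norm_mul, n4, mul_one]
  have ne : ‖β * e‖ = ‖β‖ := by rw [norm_mul, n2, mul_one]
  rcases lt_or_gt_of_ne hN with hlt | hlt
  · refine aux_main_s4 γ α _ hd0 hγ ?_ hne hupper _ hdisc hαH hγH
    intro i j hij
    fin_cases i <;> fin_cases j <;> first
      | exact absurd hij (by decide)
      | exact hlt.le.trans nf.ge
      | exact hlt.le.trans ne.ge
      | exact (nf.trans ne.symm).le
  · refine aux_main_s4 γ⁻¹ α (fun i => ((![β⁻¹ ^ 2, β * f, β * e] : Fin 3 → ℂ) i)⁻¹)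
      (fun i => inv_ne_zero (hd0 i)) ?_ ?_ ?_ hupper _ hdisc hαH (Subgroup.inv_mem _ hγH)
    · rw [Matrix.coe_units_inv, hγ]
      apply Matrix.inv_eq_right_inv
      rw [Matrix.diagonal_mul_diagonal, ← Matrix.diagonal_one]
      congr 1
      funext i
      exact mul_inv_cancel₀ (hd0 i)
    · intro i j hij
      rw [norm_inv, norm_inv]
      refine inv_anti₀ (norm_pos_iff.2 (hd0 j)) ?_
      fin_cases i <;> fin_cases j <;> first
        | exact absurd hij (by decide)
        | exact nf.le.trans hlt.le
        | exact ne.le.trans hlt.le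
        | exact (ne.trans nf.symm).le
    · intro i j hij n hn h
      exact hne i j hij n hn (inv_injective ((inv_pow _ n).symm.trans (h.trans (inv_pow _ n))))
end

section
/- Let Γ ≤ GL(3,ℂ) be a discrete subgroup all of whose elements are upper triangular. If Γ contains an irrational screw, i.e. a matrix diag(β⁻², β·e^{4πiθ}, β·e^{2πiθ}) with β ∈ ℂ∖{0}, |β| ≠ 1 and θ ∈ ℝ∖ℚ, then Γ is commutative. -/
theorem screw_key (Γ : Subgroup (Matrix.GeneralLinearGroup (Fin 3) ℂ))
    (hdisc : DiscreteTopology Γ)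
    (hupper : ∀ γ ∈ Γ, ∀ i j : Fin 3, j < i → (γ : Matrix (Fin 3) (Fin 3) ℂ) i j = 0)
    (p : Matrix.GeneralLinearGroup (Fin 3) ℂ) (hp : p ∈ Γ) (d : Fin 3 → ℂ)
    (hpd : (p : Matrix (Fin 3) (Fin 3) ℂ) = Matrix.diagonal d)
    (hd0 : ∀ i, d i ≠ 0) (hd : ∀ i j, i ≤ j → ‖d i‖ ≤ ‖d j‖)
    (h : Matrix.GeneralLinearGroup (Fin 3) ℂ) (hh : h ∈ Γ) :
    ∃ k : ℕ, 1 ≤ k ∧ ∀ i j, d i ^ k * (h : Matrix (Fin 3) (Fin 3) ℂ) i j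
      = (h : Matrix (Fin 3) (Fin 3) ℂ) i j * d j ^ k := by
  have hpn : ∀ n : ℕ, ((p ^ n : Matrix.GeneralLinearGroup (Fin 3) ℂ) : Matrix (Fin 3) (Fin 3) ℂ)
      = Matrix.diagonal (fun i => d i ^ n) := by
    intro n
    rw [Units.val_pow_eq_pow_val, hpd, Matrix.diagonal_pow]
    rfl
  have hbound : ∀ x ∈ Γ, ∀ n : ℕ, ∀ i j,
      ‖((p ^ n * x * (p ^ n)⁻¹ : Matrix.GeneralLinearGroup (Fin 3) ℂ) :
        Matrix (Fin 3) (Fin 3) ℂ) i j‖ ≤ ‖(x : Matrix (Fin 3) (Fin 3) ℂ) i j‖ := by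
    intro x hx n i j
    have e : (p ^ n * x * (p ^ n)⁻¹) * p ^ n = p ^ n * x := by group
    have hmem : p ^ n * x * (p ^ n)⁻¹ ∈ Γ :=
        Γ.mul_mem (Γ.mul_mem (Γ.pow_mem hp n) hx) (Γ.inv_mem (Γ.pow_mem hp n))
    generalize p ^ n * x * (p ^ n)⁻¹ = y at e hmem ⊢
    have e2 := congrArg (fun y : Matrix.GeneralLinearGroup (Fin 3) ℂ =>
      ‖(y : Matrix (Fin 3) (Fin 3) ℂ) i j‖) e
    simp only [Units.val_mul] at e2
    rw [hpn n, Matrix.mul_diagonal, Matrix.diagonal_mul,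
      norm_mul, norm_mul, norm_pow, norm_pow] at e2
    rcases le_or_gt i j with hij | hij
    · have h1 : ‖d i‖ ^ n ≤ ‖d j‖ ^ n := pow_le_pow_left₀ (norm_nonneg _) (hd i j hij) n
      have h2 : 0 < ‖d j‖ ^ n := pow_pos (norm_pos_iff.mpr (hd0 j)) n
      refine le_of_mul_le_mul_right ?_ h2
      rw [e2, mul_comm]
      exact mul_le_mul_of_nonneg_left h1 (norm_nonneg _)
    · rw [hupper _ hmem i j hij]
      simp
  let C : Matrix.GeneralLinearGroup (Fin 3) ℂ → Set (Matrix (Fin 3) (Fin 3) ℂ) := fun x =>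
    Set.pi Set.univ fun i => Set.pi Set.univ fun j =>
      Metric.closedBall (0 : ℂ) ‖(x : Matrix (Fin 3) (Fin 3) ℂ) i j‖
  have hC : ∀ x, IsCompact (C x) := fun x =>
    isCompact_univ_pi fun i => isCompact_univ_pi fun j => isCompact_closedBall _ _
  have hK : IsCompact (Units.embedProduct (Matrix (Fin 3) (Fin 3) ℂ) ⁻¹'
      (C h ×ˢ (MulOpposite.unop ⁻¹' (C h⁻¹)))) := by
    refine Units.isClosedEmbedding_embedProduct.isCompact_preimage ?_
    exact (hC h).prod (MulOpposite.opHomeomorph.symm.isClosedEmbedding.isCompact_preimage (hC h⁻¹))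
  have hfin := (Subgroup.tendsto_coe_cofinite_of_discrete Γ ⟨hdisc⟩) hK.compl_mem_cocompact
  rw [Filter.mem_map, Filter.mem_cofinite] at hfin
  let f : ℕ → Γ := fun n => ⟨p ^ n * h * (p ^ n)⁻¹,
    Γ.mul_mem (Γ.mul_mem (Γ.pow_mem hp n) hh) (Γ.inv_mem (Γ.pow_mem hp n))⟩
  have hf : ∀ n, f n ∈ (((fun x : Γ => (x : Matrix.GeneralLinearGroup (Fin 3) ℂ)) ⁻¹'
      (Units.embedProduct (Matrix (Fin 3) (Fin 3) ℂ) ⁻¹'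
      (C h ×ˢ (MulOpposite.unop ⁻¹' (C h⁻¹))))ᶜ)ᶜ : Set Γ) := by
    intro n
    simp only [Set.preimage_compl, compl_compl]
    refine ⟨?_, ?_⟩
    · intro i _ j _
      rw [mem_closedBall_zero_iff]
      exact hbound h hh n i j
    · intro i _ j _
      rw [mem_closedBall_zero_iff]
      have e : (p ^ n * h * (p ^ n)⁻¹)⁻¹ = p ^ n * h⁻¹ * (p ^ n)⁻¹ := by group
      have := hbound h⁻¹ (Γ.inv_mem hh) n i j
      rw [← e] at this
      exact this
  have hmain : ∃ m n : ℕ, m < n ∧ f m = f n := by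
    obtain ⟨m, _, n, _, hmn, he⟩ := Set.infinite_univ.exists_ne_map_eq_of_mapsTo
      (f := f) (fun n _ => hf n) hfin
    rcases lt_or_gt_of_ne hmn with hl | hl
    · exact ⟨m, n, hl, he⟩
    · exact ⟨n, m, hl, he.symm⟩
  obtain ⟨m, n, hmn, he⟩ := hmain
  refine ⟨n - m, by omega, ?_⟩
  have he' : p ^ m * h * (p ^ m)⁻¹ = p ^ n * h * (p ^ n)⁻¹ := congrArg Subtype.val he
  obtain ⟨k, rfl⟩ := Nat.exists_eq_add_of_lt hmn
  have hk : m + k + 1 - m = k + 1 := by omega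
  rw [hk]
  have hc : p ^ (k + 1) * h = h * p ^ (k + 1) := by
    rw [add_assoc, pow_add] at he'
    have h3 : p ^ m * h * (p ^ m)⁻¹ =
      p ^ m * (p ^ (k + 1) * h * (p ^ (k + 1))⁻¹) * (p ^ m)⁻¹ := by
      rw [he']; simp only [mul_inv_rev, mul_assoc]
    have h4 := mul_left_cancel (mul_right_cancel h3)
    exact (eq_mul_inv_iff_mul_eq.mp h4).symm
  intro i j
  have := congrArg (fun y : Matrix.GeneralLinearGroup (Fin 3) ℂ =>
      (y : Matrix (Fin 3) (Fin 3) ℂ) i j) hc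
  simp only [Units.val_mul] at this
  rwa [hpn, Matrix.mul_diagonal, Matrix.diagonal_mul] at this


/-- If a discrete subgroup `Γ ≤ GL(3, ℂ)` consisting of upper triangular matrices
contains an irrational screw `diag(β⁻², β·e^{4πiθ}, β·e^{2πiθ})` (`|β| ≠ 1`, `θ`
irrational), then `Γ` is commutative. -/
theorem stmt_5 (Γ : Subgroup (Matrix.GeneralLinearGroup (Fin 3) ℂ))
    (hdisc : DiscreteTopology Γ)
    (hupper : ∀ γ ∈ Γ, ∀ i j : Fin 3, j < i → (γ : Matrix (Fin 3) (Fin 3) ℂ) i j = 0)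
    (hscrew : ∃ γ ∈ Γ, ∃ (β : ℂ) (θ : ℝ), β ≠ 0 ∧ ‖β‖ ≠ 1 ∧ Irrational θ ∧
      (γ : Matrix (Fin 3) (Fin 3) ℂ) =
        Matrix.diagonal
          ![β⁻¹ ^ 2, β * Complex.exp (4 * (Real.pi : ℂ) * Complex.I * (θ : ℂ)),
            β * Complex.exp (2 * (Real.pi : ℂ) * Complex.I * (θ : ℂ))]) :
    ∀ a ∈ Γ, ∀ b ∈ Γ, a * b = b * a := by
  obtain ⟨g, hg, β, θ, hβ, hβ1, hθ, hgd⟩ := hscrew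
  have hE : ∀ r : ℝ, ‖Complex.exp (r * Complex.I)‖ = 1 := Complex.norm_exp_ofReal_mul_I
  have n4 : ‖Complex.exp (4 * (Real.pi : ℂ) * Complex.I * (θ : ℂ))‖ = 1 := by
    rw [← hE (4 * Real.pi * θ)]; congr 2; push_cast; ring
  have n2 : ‖Complex.exp (2 * (Real.pi : ℂ) * Complex.I * (θ : ℂ))‖ = 1 := by
    rw [← hE (2 * Real.pi * θ)]; congr 2; push_cast; ring
  have h42 : Complex.exp (4 * (Real.pi : ℂ) * Complex.I * (θ : ℂ)) =
      Complex.exp (2 * (Real.pi : ℂ) * Complex.I * (θ : ℂ)) *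
      Complex.exp (2 * (Real.pi : ℂ) * Complex.I * (θ : ℂ)) := by
    rw [← Complex.exp_add]; congr 1; ring
  have hirr : ∀ k : ℕ, 1 ≤ k →
      Complex.exp (2 * (Real.pi : ℂ) * Complex.I * (θ : ℂ)) ^ k ≠ 1 := by
    intro k hk h1
    rw [← Complex.exp_nat_mul, Complex.exp_eq_one_iff] at h1
    obtain ⟨z, hz⟩ := h1
    have h2 : (k : ℂ) * θ = z := by
      refine mul_right_cancel₀ Complex.two_pi_I_ne_zero ?_
      rw [← hz]; ring
    have h3 : (k : ℝ) * θ = z := by exact_mod_cast h2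
    refine (hθ.natCast_mul (m := k) (by omega)) ⟨z, ?_⟩
    rw [h3]; simp
  generalize Complex.exp (4 * (Real.pi : ℂ) * Complex.I * (θ : ℂ)) = F at *
  generalize Complex.exp (2 * (Real.pi : ℂ) * Complex.I * (θ : ℂ)) = E at *
  have hE0 : E ≠ 0 := by rintro rfl; simp at n2
  have hF0 : F ≠ 0 := by rintro rfl; simp at n4
  set d : Fin 3 → ℂ := ![β⁻¹ ^ 2, β * F, β * E] with hd
  have hd0 : ∀ i, d i ≠ 0 := by
    intro i; fin_cases i <;> simp [hd, hβ, hE0, hF0]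
  have N0 : ‖d 0‖ = ‖β‖⁻¹ ^ 2 := by simp [hd]
  have N1 : ‖d 1‖ = ‖β‖ := by simp [hd, n4]
  have N2 : ‖d 2‖ = ‖β‖ := by simp [hd, n2]
  have hβp : 0 < ‖β‖ := norm_pos_iff.mpr hβ
  have key : ∀ h ∈ Γ, ∃ k : ℕ, 1 ≤ k ∧ ∀ i j, d i ^ k * (h : Matrix (Fin 3) (Fin 3) ℂ) i j
      = (h : Matrix (Fin 3) (Fin 3) ℂ) i j * d j ^ k := by
    intro h hh
    rcases lt_or_gt_of_ne hβ1 with hlt | hgt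
    · have hinv : ((g⁻¹ : Matrix.GeneralLinearGroup (Fin 3) ℂ) : Matrix (Fin 3) (Fin 3) ℂ)
          = Matrix.diagonal (fun i => (d i)⁻¹) := by
        refine Units.inv_eq_of_mul_eq_one_right ?_
        rw [hgd, Matrix.diagonal_mul_diagonal, ← Matrix.diagonal_one]
        congr 1
        funext i
        exact mul_inv_cancel₀ (hd0 i)
      have hle : ‖β‖ ≤ ‖β‖⁻¹ ^ 2 :=
        hlt.le.trans (one_le_pow₀ ((one_le_inv₀ hβp).mpr hlt.le))
      obtain ⟨k, hk, H⟩ := screw_key Γ hdisc hupper g⁻¹ (Γ.inv_mem hg) _ hinv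
        (fun i => inv_ne_zero (hd0 i)) (by
          intro i j hij
          rw [norm_inv, norm_inv]
          refine inv_anti₀ (norm_pos_iff.mpr (hd0 j)) ?_
          fin_cases i <;> fin_cases j <;> simp_all) h hh
      refine ⟨k, hk, fun i j => ?_⟩
      have H1 := H i j
      have a1 := pow_ne_zero k (hd0 i)
      have a2 := pow_ne_zero k (hd0 j)
      rw [inv_pow, inv_pow] at H1
      field_simp at H1
      linear_combination -H1
    · have hle : ‖β‖⁻¹ ^ 2 ≤ ‖β‖ :=
        (pow_le_one₀ (inv_nonneg.mpr hβp.le) (inv_le_one_of_one_le₀ hgt.le)).trans hgt.le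
      exact screw_key Γ hdisc hupper g hg d hgd hd0 (by
          intro i j hij
          fin_cases i <;> fin_cases j <;> simp_all) h hh
  have hN : ∀ k : ℕ, 1 ≤ k → (‖β‖⁻¹ ^ 2) ^ k ≠ ‖β‖ ^ k := by
    intro k hk he
    have h1 := (pow_left_inj₀ (by positivity) hβp.le (by omega)).mp he
    have h2 : ‖β‖ ^ 3 = 1 := by
      field_simp at h1
      linarith
    exact hβ1 ((pow_eq_one_iff_of_nonneg hβp.le (by norm_num)).mp h2)
  have hdiag : ∀ h ∈ Γ, (h : Matrix (Fin 3) (Fin 3) ℂ) =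
      Matrix.diagonal (fun i => (h : Matrix (Fin 3) (Fin 3) ℂ) i i) := by
    intro h hh
    obtain ⟨k, hk, H⟩ := key h hh
    have hz : ∀ i j, d i ^ k ≠ d j ^ k → (h : Matrix (Fin 3) (Fin 3) ℂ) i j = 0 := by
      intro i j hne
      have : (d i ^ k - d j ^ k) * (h : Matrix (Fin 3) (Fin 3) ℂ) i j = 0 := by
        linear_combination H i j
      exact (mul_eq_zero.mp this).resolve_left (sub_ne_zero.mpr hne)
    have z01 : (h : Matrix (Fin 3) (Fin 3) ℂ) 0 1 = 0 := hz 0 1 fun he => by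
      apply hN k hk; rw [← N0, ← norm_pow, he, norm_pow, N1]
    have z02 : (h : Matrix (Fin 3) (Fin 3) ℂ) 0 2 = 0 := hz 0 2 fun he => by
      apply hN k hk; rw [← N0, ← norm_pow, he, norm_pow, N2]
    have z12 : (h : Matrix (Fin 3) (Fin 3) ℂ) 1 2 = 0 := hz 1 2 fun he => by
      apply hirr k hk
      have e1 : d 1 = d 2 * E := by simp [hd, h42, mul_assoc]
      rw [e1, mul_pow] at he
      exact mul_left_cancel₀ (pow_ne_zero k (hd0 2)) (by rw [he, mul_one])
    have z10 := hupper h hh 1 0 (by decide)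
    have z20 := hupper h hh 2 0 (by decide)
    have z21 := hupper h hh 2 1 (by decide)
    ext i j
    fin_cases i <;> fin_cases j <;> simp [Matrix.diagonal, z01, z02, z12, z10, z20, z21]
  intro a ha b hb
  apply Units.ext
  rw [Units.val_mul, Units.val_mul, hdiag a ha, hdiag b hb, Matrix.diagonal_mul_diagonal,
    Matrix.diagonal_mul_diagonal]
  congr 1
  funext i
  exact mul_comm _ _
end

section
/- Let Γ ≤ GL(3,ℂ) be a discrete, non-commutative subgroup all of whose elements are upper triangular, such that Γ is torsion free and the multiplicative groups λ₁₂(Γ) and λ₂₃(Γ) are torsion free. Then Γ contains no complex homothety of the form diag(λ⁻², λ, λ) with λ ∈ ℂ∖{0} and |λ| ≠ 1. -/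
open Filter Topology

abbrev G3 := Matrix.GeneralLinearGroup (Fin 3) ℂ

lemma ev_eq (Γ : Subgroup G3) (hdisc : DiscreteTopology Γ) (u : ℕ → G3) (hu : ∀ n, u n ∈ Γ)
    (g : G3) (h : Tendsto u atTop (𝓝 g)) : ∀ᶠ n in atTop, u n = g := by
  have hcl : IsClosed (Γ : Set G3) := Subgroup.isClosed_of_discrete
  have hg : g ∈ Γ := hcl.mem_of_tendsto h (Eventually.of_forall hu)
  have h2 : Tendsto (fun n => (⟨u n, hu n⟩ : Γ)) atTop (𝓝 ⟨g, hg⟩) := by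
    rw [tendsto_subtype_rng]; exact h
  rw [nhds_discrete, tendsto_pure] at h2
  filter_upwards [h2] with n hn
  exact congrArg Subtype.val hn

/-- unipotent element. -/
def U3 (y : ℂ) : G3 :=
  ⟨!![1,0,0;0,1,y;0,0,1], !![1,0,0;0,1,-y;0,0,1],
    by ext i j; fin_cases i <;> fin_cases j <;> simp [Matrix.mul_apply, Fin.sum_univ_three],
    by ext i j; fin_cases i <;> fin_cases j <;> simp [Matrix.mul_apply, Fin.sum_univ_three]⟩

lemma U3_val (y : ℂ) : (U3 y : Matrix (Fin 3) (Fin 3) ℂ) = !![1,0,0;0,1,y;0,0,1] := rfl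

lemma U3_cont : Continuous U3 := by
  rw [Units.continuous_iff]
  constructor
  · refine continuous_matrix ?_
    intro i j
    fin_cases i <;> fin_cases j <;> simp [U3, Function.comp_def] <;> fun_prop
  · refine continuous_matrix ?_
    intro i j
    have : ∀ y, ((U3 y)⁻¹ : G3).val = !![1,0,0;0,1,-y;0,0,1] := fun y => rfl
    simp only [this]
    fin_cases i <;> fin_cases j <;> simp <;> fun_prop

lemma step2 (Γ : Subgroup G3) (hdisc : DiscreteTopology Γ) (x μ : ℂ) (hx : x ≠ 0)
    (hμ0 : μ ≠ 0) (hμ : ‖μ‖ ≤ 1) (hU : ∀ n : ℕ, U3 (μ ^ n * x) ∈ Γ) :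
    ∃ n : ℕ, 0 < n ∧ μ ^ n = 1 := by
  obtain ⟨ν, -, φ, hφ, hlim⟩ := (isCompact_closedBall (0:ℂ) 1).tendsto_subseq
    (x := fun n : ℕ => μ ^ n) (fun n => by
      rw [mem_closedBall_zero_iff, norm_pow]; exact pow_le_one₀ (norm_nonneg _) hμ)
  have h := ev_eq Γ hdisc (fun n => U3 (μ ^ (φ n) * x)) (fun n => hU _) (U3 (ν * x))
    ((U3_cont.tendsto _).comp (hlim.mul_const x))
  obtain ⟨N, hN⟩ := eventually_atTop.1 h
  have e := (hN N le_rfl).trans (hN (N+1) (by omega)).symm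
  have e2 : (U3 (μ ^ φ N * x)).val 1 2 = (U3 (μ ^ φ (N+1) * x)).val 1 2 :=
    congrArg (fun w : G3 => w.val 1 2) e
  simp [U3_val, hx] at e2
  have hlt : φ N < φ (N+1) := hφ (Nat.lt_succ_self N)
  refine ⟨φ (N+1) - φ N, by omega, ?_⟩
  have : μ ^ φ N * μ ^ (φ (N+1) - φ N) = μ ^ φ N * 1 := by
    rw [← pow_add, mul_one, e2]; congr 1; omega
  exact mul_left_cancel₀ (pow_ne_zero _ hμ0) this

lemma tendsto_GL (u : ℕ → G3) (g : G3)
    (h : ∀ i j, Tendsto (fun n => (u n).val i j) atTop (𝓝 (g.val i j))) :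
    Tendsto u atTop (𝓝 g) := by
  have hv : Tendsto (fun n => (u n).val) atTop (𝓝 g.val) :=
    tendsto_pi_nhds.2 fun i => tendsto_pi_nhds.2 fun j => h i j
  have hd : g.val.det ≠ 0 := (g.isUnit.map Matrix.detMonoidHom).ne_zero
  have hI : ∀ w : G3, (w⁻¹).val = (w.val.det)⁻¹ • w.val.adjugate := by
    intro w
    rw [Matrix.coe_units_inv, Matrix.inv_def, Ring.inverse_eq_inv']
  have hc1 : Continuous (fun A : Matrix (Fin 3) (Fin 3) ℂ => A.det) :=
    Continuous.matrix_det continuous_id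
  have hc2 : Continuous (fun A : Matrix (Fin 3) (Fin 3) ℂ => A.adjugate) :=
    Continuous.matrix_adjugate continuous_id
  have hi : Tendsto (fun n => ((u n)⁻¹).val) atTop (𝓝 (g⁻¹).val) := by
    simp only [hI]
    exact (((hc1.tendsto _).comp hv).inv₀ hd).smul ((hc2.tendsto _).comp hv)
  rw [Units.isInducing_embedProduct.tendsto_nhds_iff]
  exact hv.prodMk_nhds ((MulOpposite.continuous_op.tendsto _).comp hi)

lemma diag_ne (γ : G3) (h : ∀ i j : Fin 3, j < i → γ.val i j = 0) (i : Fin 3) : γ.val i i ≠ 0 := by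
  have hd : γ.val.det ≠ 0 := (γ.isUnit.map Matrix.detMonoidHom).ne_zero
  rw [Matrix.det_of_upperTriangular (fun i j hij => h i j hij)] at hd
  exact Finset.prod_ne_zero_iff.1 hd i (Finset.mem_univ _)

lemma step1 (Γ : Subgroup G3) (hdisc : DiscreteTopology Γ)
    (hupper : ∀ γ ∈ Γ, ∀ i j : Fin 3, j < i → γ.val i j = 0)
    (g : G3) (hg : g ∈ Γ) (a b : ℂ) (hb : b ≠ 0) (ha : a ≠ 0) (hab : ‖a / b‖ < 1)
    (hgv : g.val = Matrix.diagonal ![a, b, b]) (γ : G3) (hγ : γ ∈ Γ) :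
    γ.val 0 1 = 0 ∧ γ.val 0 2 = 0 := by
  have h10 := hupper γ hγ 1 0 (by decide)
  have h20 := hupper γ hγ 2 0 (by decide)
  have h21 := hupper γ hγ 2 1 (by decide)
  have d0 := diag_ne γ (hupper γ hγ) 0
  have d1 := diag_ne γ (hupper γ hγ) 1
  have d2 := diag_ne γ (hupper γ hγ) 2
  let M : Matrix (Fin 3) (Fin 3) ℂ := !![γ.val 0 0, 0, 0; 0, γ.val 1 1, γ.val 1 2; 0, 0, γ.val 2 2]
  have hM : M.det ≠ 0 := by
    simp [M, Matrix.det_fin_three, d0, d1, d2]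
  let m : G3 := Matrix.GeneralLinearGroup.mkOfDetNeZero M hM
  have hm : m.val = M := rfl
  let u : ℕ → G3 := fun n => g ^ n * γ * (g ^ n)⁻¹
  have huv : ∀ n, (u n).val = !![γ.val 0 0, (a/b)^n * γ.val 0 1, (a/b)^n * γ.val 0 2;
      0, γ.val 1 1, γ.val 1 2; 0, 0, γ.val 2 2] := by
    intro n
    have e : u n * g ^ n = g ^ n * γ := by simp [u]
    have e' : (u n).val * (g ^ n).val = (g^n).val * γ.val := congrArg Units.val e
    rw [Units.val_pow_eq_pow_val, hgv, Matrix.diagonal_pow] at e'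
    have hij : ∀ i j, (u n).val i j * (![a,b,b] j)^n = (![a,b,b] i)^n * γ.val i j := by
      intro i j
      have := congrFun (congrFun e' i) j
      simpa [Matrix.mul_diagonal, Matrix.diagonal_mul] using this
    have hbn := pow_ne_zero n hb
    have han := pow_ne_zero n ha
    ext i j
    have := hij i j
    fin_cases i <;> fin_cases j <;> simp [h10, h20, h21, ha, hb] at this ⊢ <;>
      first
      | exact this
      | exact mul_right_cancel₀ han (by rw [this]; ring)
      | exact mul_right_cancel₀ hbn (by rw [this, div_pow]; field_simp)
      | exact mul_right_cancel₀ hbn (by rw [this]; ring)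
  have hlim := tendsto_pow_atTop_nhds_zero_of_norm_lt_one hab
  have ht : Tendsto u atTop (𝓝 m) := by
    apply tendsto_GL
    intro i j
    simp only [huv, hm, M]
    fin_cases i <;> fin_cases j <;> simp <;>
      first
      | simpa using hlim.mul_const (γ.val 0 1)
      | simpa using hlim.mul_const (γ.val 0 2)
  have hu : ∀ n, u n ∈ Γ := fun n => Γ.mul_mem (Γ.mul_mem (Γ.pow_mem hg n) hγ)
    (Γ.inv_mem (Γ.pow_mem hg n))
  obtain ⟨n, hn⟩ := (ev_eq Γ hdisc u hu m ht).exists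
  have e := congrArg Units.val hn
  rw [huv, hm] at e
  have e1 := congrFun (congrFun e 0) 1
  have e2 := congrFun (congrFun e 0) 2
  simp [M, ha, hb] at e1 e2
  have e1 : γ.val 0 1 = 0 := by tauto
  have e2 : γ.val 0 2 = 0 := by tauto
  exact ⟨e1, e2⟩

lemma inv_diag (Γ : Subgroup G3)
    (hupper : ∀ γ ∈ Γ, ∀ i j : Fin 3, j < i → γ.val i j = 0) (k : G3) (hk : k ∈ Γ) (i : Fin 3) :
    (k⁻¹).val i i = (k.val i i)⁻¹ := by
  have h10 := hupper k hk 1 0 (by decide)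
  have h20 := hupper k hk 2 0 (by decide)
  have h21 := hupper k hk 2 1 (by decide)
  have hk' := Γ.inv_mem hk
  have g10 := hupper _ hk' 1 0 (by decide)
  have g20 := hupper _ hk' 2 0 (by decide)
  have g21 := hupper _ hk' 2 1 (by decide)
  have e : (k⁻¹).val * k.val = 1 := by rw [← Units.val_mul]; simp
  have e := congrFun (congrFun e i) i
  apply eq_inv_of_mul_eq_one_left
  rw [Matrix.mul_apply, Fin.sum_univ_three] at e
  fin_cases i <;> simp only [Fin.zero_eta, Fin.mk_one, Fin.reduceFinMk, h10, h20, h21, g10, g20, g21, Matrix.one_apply_eq, mul_zero, zero_mul, add_zero, zero_add] at e ⊢ <;> exact e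

lemma step3 (Γ : Subgroup G3) (hdisc : DiscreteTopology Γ)
    (hupper : ∀ γ ∈ Γ, ∀ i j : Fin 3, j < i → γ.val i j = 0)
    (h0 : ∀ γ ∈ Γ, γ.val 0 1 = 0 ∧ γ.val 0 2 = 0)
    (htf23 : ∀ γ ∈ Γ, ∀ n : ℕ, 0 < n → (γ.val 1 1 / γ.val 2 2) ^ n = 1 →
      γ.val 1 1 / γ.val 2 2 = 1) (x : ℂ) (hx : x ≠ 0) (hU : U3 x ∈ Γ)
    (k : G3) (hk : k ∈ Γ) : k.val 1 1 = k.val 2 2 := by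
  have key : ∀ k ∈ Γ, ‖k.val 1 1 / k.val 2 2‖ ≤ 1 → k.val 1 1 / k.val 2 2 = 1 := by
    intro k hk hn
    have h10 := hupper k hk 1 0 (by decide)
    have h20 := hupper k hk 2 0 (by decide)
    have h21 := hupper k hk 2 1 (by decide)
    obtain ⟨h01, h02⟩ := h0 k hk
    have d1 := diag_ne k (hupper k hk) 1
    have d2 := diag_ne k (hupper k hk) 2
    obtain ⟨n, hn, hp⟩ := step2 Γ hdisc x (k.val 1 1 / k.val 2 2) hx (div_ne_zero d1 d2) hn (by
      intro n
      induction n with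
      | zero => simpa using hU
      | succ n ih =>
        have : U3 ((k.val 1 1 / k.val 2 2) ^ (n+1) * x)
            = k * U3 ((k.val 1 1 / k.val 2 2) ^ n * x) * k⁻¹ := by
          rw [eq_mul_inv_iff_mul_eq]
          generalize hy : (k.val 1 1 / k.val 2 2) ^ n * x = y
          have : (k.val 1 1 / k.val 2 2) ^ (n+1) * x = (k.val 1 1 / k.val 2 2) * y := by
            rw [← hy]; ring
          rw [this]
          apply Units.ext
          rw [Units.val_mul, Units.val_mul, U3_val, U3_val]
          ext i j
          rw [Matrix.mul_apply, Matrix.mul_apply, Fin.sum_univ_three, Fin.sum_univ_three]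
          fin_cases i <;> fin_cases j <;> simp [h10, h20, h21, h01, h02]
          field_simp
          ring
        rw [this]
        exact Γ.mul_mem (Γ.mul_mem hk ih) (Γ.inv_mem hk))
    exact htf23 k hk n hn hp
  have d1 := diag_ne k (hupper k hk) 1
  have d2 := diag_ne k (hupper k hk) 2
  rcases le_total ‖k.val 1 1 / k.val 2 2‖ 1 with h | h
  · exact (div_eq_one_iff_eq d2).1 (key k hk h)
  · have := key k⁻¹ (Γ.inv_mem hk) (by
      rw [inv_diag Γ hupper k hk, inv_diag Γ hupper k hk]
      rw [show (k.val 1 1)⁻¹ / (k.val 2 2)⁻¹ = (k.val 1 1 / k.val 2 2)⁻¹ by field_simp, norm_inv]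
      exact inv_le_one_of_one_le₀ (by simpa using h))
    rw [inv_diag Γ hupper k hk, inv_diag Γ hupper k hk] at this
    field_simp at this
    exact this.symm

/-- A discrete, non-commutative, torsion-free subgroup `Γ ≤ GL(3, ℂ)` of upper triangular
matrices, such that the multiplicative groups `λ₁₂(Γ)` and `λ₂₃(Γ)` are torsion free,
contains no complex homothety `diag(λ⁻², λ, λ)` with `|λ| ≠ 1`. -/
theorem stmt_6 (Γ : Subgroup (Matrix.GeneralLinearGroup (Fin 3) ℂ))
    (hdisc : DiscreteTopology Γ)
    (hnoncomm : ¬ ∀ a ∈ Γ, ∀ b ∈ Γ, a * b = b * a)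
    (hupper : ∀ γ ∈ Γ, ∀ i j : Fin 3, j < i → (γ : Matrix (Fin 3) (Fin 3) ℂ) i j = 0)
    (htf : ∀ γ ∈ Γ, ∀ n : ℕ, 0 < n → γ ^ n = 1 → γ = 1)
    (htf12 : ∀ γ ∈ Γ, ∀ n : ℕ, 0 < n →
      ((γ : Matrix (Fin 3) (Fin 3) ℂ) 0 0 / (γ : Matrix (Fin 3) (Fin 3) ℂ) 1 1) ^ n = 1 →
      (γ : Matrix (Fin 3) (Fin 3) ℂ) 0 0 / (γ : Matrix (Fin 3) (Fin 3) ℂ) 1 1 = 1)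
    (htf23 : ∀ γ ∈ Γ, ∀ n : ℕ, 0 < n →
      ((γ : Matrix (Fin 3) (Fin 3) ℂ) 1 1 / (γ : Matrix (Fin 3) (Fin 3) ℂ) 2 2) ^ n = 1 →
      (γ : Matrix (Fin 3) (Fin 3) ℂ) 1 1 / (γ : Matrix (Fin 3) (Fin 3) ℂ) 2 2 = 1) :
    ¬ ∃ γ ∈ Γ, ∃ lam : ℂ, lam ≠ 0 ∧ ‖lam‖ ≠ 1 ∧
      (γ : Matrix (Fin 3) (Fin 3) ℂ) = Matrix.diagonal ![lam⁻¹ ^ 2, lam, lam] := by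
  rintro ⟨g, hg, lam, hl0, hl1, hgv⟩
  have h0 : ∀ γ ∈ Γ, γ.val 0 1 = 0 ∧ γ.val 0 2 = 0 := by
    intro γ hγ
    rcases lt_or_gt_of_ne hl1 with h | h
    · have hi : (g⁻¹).val = Matrix.diagonal ![lam ^ 2, lam⁻¹, lam⁻¹] := by
        rw [Units.inv_eq_of_mul_eq_one_right]
        rw [hgv, Matrix.diagonal_mul_diagonal, ← Matrix.diagonal_one]
        congr 1
        ext i
        fin_cases i <;> simp [hl0]
      refine step1 Γ hdisc hupper g⁻¹ (Γ.inv_mem hg) (lam ^ 2) (lam⁻¹) (inv_ne_zero hl0)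
        (pow_ne_zero _ hl0) ?_ hi γ hγ
      rw [show lam ^ 2 / lam⁻¹ = lam ^ 3 by field_simp, norm_pow]
      exact pow_lt_one₀ (norm_nonneg _) h (by norm_num)
    · refine step1 Γ hdisc hupper g hg (lam⁻¹ ^ 2) lam hl0
        (pow_ne_zero _ (inv_ne_zero hl0)) ?_ hgv γ hγ
      rw [show lam⁻¹ ^ 2 / lam = (lam⁻¹) ^ 3 by field_simp, norm_pow, norm_inv]
      exact pow_lt_one₀ (by positivity) (inv_lt_one_of_one_lt₀ h) (by norm_num)
  apply hnoncomm
  intro a ha b hb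
  by_contra hne
  have hc : a * b * a⁻¹ * b⁻¹ ∈ Γ :=
    Γ.mul_mem (Γ.mul_mem (Γ.mul_mem ha hb) (Γ.inv_mem ha)) (Γ.inv_mem hb)
  have he : (a * b * a⁻¹ * b⁻¹) * (b * a) = a * b := by group
  generalize a * b * a⁻¹ * b⁻¹ = c at hc he
  have a10 := hupper a ha 1 0 (by decide)
  have a20 := hupper a ha 2 0 (by decide)
  have a21 := hupper a ha 2 1 (by decide)
  obtain ⟨a01, a02⟩ := h0 a ha
  have b10 := hupper b hb 1 0 (by decide)
  have b20 := hupper b hb 2 0 (by decide)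
  have b21 := hupper b hb 2 1 (by decide)
  obtain ⟨b01, b02⟩ := h0 b hb
  have c10 := hupper c hc 1 0 (by decide)
  have c20 := hupper c hc 2 0 (by decide)
  have c21 := hupper c hc 2 1 (by decide)
  obtain ⟨c01, c02⟩ := h0 c hc
  have he' : c.val * (b.val * a.val) = a.val * b.val := congrArg Units.val he
  have hdiag : ∀ i, c.val i i = 1 := by
    intro i
    have da := diag_ne a (hupper a ha) i
    have db := diag_ne b (hupper b hb) i
    have e := congrFun (congrFun he' i) i
    simp only [Matrix.mul_apply, Fin.sum_univ_three] at e
    apply mul_right_cancel₀ (mul_ne_zero db da)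
    fin_cases i <;>
      simp only [Fin.zero_eta, Fin.mk_one, Fin.reduceFinMk, a10, a20, a21, a01, a02, b10, b20, b21,
        b01, b02, c10, c20, c21, c01, c02, mul_zero, zero_mul, add_zero, zero_add] at e ⊢ <;>
      rw [e] <;> ring
  have hcU : c = U3 (c.val 1 2) := by
    apply Units.ext
    rw [U3_val]
    ext i j
    fin_cases i <;> fin_cases j <;> simp [hdiag, c10, c20, c21, c01, c02]
  have hx : c.val 1 2 ≠ 0 := by
    intro hx
    apply hne
    have : c = 1 := by
      rw [hcU, hx]
      apply Units.ext
      rw [U3_val]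
      ext i j
      fin_cases i <;> fin_cases j <;> simp
    rw [this, one_mul] at he
    exact he.symm
  have hs := step3 Γ hdisc hupper h0 htf23 _ hx (hcU ▸ hc)
  have sa := hs a ha
  have sb := hs b hb
  apply hne
  apply Units.ext
  rw [Units.val_mul, Units.val_mul]
  ext i j
  rw [Matrix.mul_apply, Matrix.mul_apply, Fin.sum_univ_three, Fin.sum_univ_three]
  fin_cases i <;> fin_cases j <;>
    simp [a10, a20, a21, a01, a02, b10, b20, b21, b01, b02, sa, sb] <;> ring
end

section
/- Let Γ ≤ GL(3,ℂ) be a discrete, non-commutative subgroup all of whose elements are upper triangular, such that Γ is torsion free and the multiplicative groups λ₁₂(Γ) and λ₂₃(Γ) are torsion free. Then Γ contains no complex homothety of the form diag(λ, λ, λ⁻²) with λ ∈ ℂ∖{0} and |λ| ≠ 1. -/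
open Filter Topology in
theorem aux_disc (Γ : Subgroup (Matrix.GeneralLinearGroup (Fin 3) ℂ))
    (hdisc : DiscreteTopology Γ) (x : ℕ → Matrix.GeneralLinearGroup (Fin 3) ℂ)
    (hx : ∀ n, x n ∈ Γ)
    (ht : Tendsto (fun n => (x n : Matrix (Fin 3) (Fin 3) ℂ)) atTop (𝓝 1)) :
    ∃ n, x n = 1 := by
  letI : NormedRing (Matrix (Fin 3) (Fin 3) ℂ) := Matrix.linftyOpNormedRing
  letI : NormedAlgebra ℂ (Matrix (Fin 3) (Fin 3) ℂ) := Matrix.linftyOpNormedAlgebra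
  haveI : CompleteSpace (Matrix (Fin 3) (Fin 3) ℂ) := FiniteDimensional.complete ℂ _
  have he := (Units.isOpenEmbedding_val (R := Matrix (Fin 3) (Fin 3) ℂ)).isEmbedding
  have h1 : Tendsto x atTop (𝓝 1) := by
    exact he.tendsto_nhds_iff.2 ht
  have h2 : Tendsto (fun n => (⟨x n, hx n⟩ : Γ)) atTop (𝓝 1) := by
    rw [Topology.IsEmbedding.subtypeVal.tendsto_nhds_iff]
    exact h1
  rw [nhds_discrete, tendsto_pure] at h2
  obtain ⟨n, hn⟩ := h2.exists
  exact ⟨n, congrArg Subtype.val hn⟩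

open Filter Topology in
theorem aux_le (Γ : Subgroup (Matrix.GeneralLinearGroup (Fin 3) ℂ))
    (hdisc : DiscreteTopology Γ) (x g : Matrix.GeneralLinearGroup (Fin 3) ℂ)
    (hx : x ∈ Γ) (hg : g ∈ Γ) (N : Matrix (Fin 3) (Fin 3) ℂ) (s : ℂ)
    (hxN : (x : Matrix (Fin 3) (Fin 3) ℂ) = 1 + N) (hN2 : N * N = 0) (hN : N ≠ 0)
    (hc : (g : Matrix (Fin 3) (Fin 3) ℂ) * N = s • (N * (g : Matrix (Fin 3) (Fin 3) ℂ)))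
    (hs0 : s ≠ 0) (hs : ‖s‖ ≤ 1) : ∃ k : ℕ, 0 < k ∧ s ^ k = 1 := by
  have hpow : ∀ n : ℕ, ((g ^ n : Matrix.GeneralLinearGroup (Fin 3) ℂ) : Matrix (Fin 3) (Fin 3) ℂ) * N
      = s ^ n • (N * ((g ^ n : Matrix.GeneralLinearGroup (Fin 3) ℂ) : Matrix (Fin 3) (Fin 3) ℂ)) := by
    intro n
    induction n with
    | zero => simp
    | succ n ih =>
      rw [pow_succ, Units.val_mul, mul_assoc, hc, mul_smul_comm, ← mul_assoc, ih, smul_mul_assoc,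
        smul_smul, mul_assoc, pow_succ, mul_comm (s ^ n)]
  have hinv : ((x⁻¹ : Matrix.GeneralLinearGroup (Fin 3) ℂ) : Matrix (Fin 3) (Fin 3) ℂ) = 1 - N := by
    apply Units.inv_eq_of_mul_eq_one_right
    rw [hxN]
    have : (1 + N) * (1 - N) = 1 - N * N := by noncomm_ring
    rw [this, hN2, sub_zero]
  have hconj : ∀ n : ℕ, ((g ^ n * x * (g ^ n)⁻¹ : Matrix.GeneralLinearGroup (Fin 3) ℂ) :
      Matrix (Fin 3) (Fin 3) ℂ) = 1 + s ^ n • N := by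
    intro n
    rw [Units.val_mul, Units.mul_inv_eq_iff_eq_mul, Units.val_mul, hxN, mul_add, hpow, add_mul]
    simp
  have hconj' : ∀ n : ℕ, ((g ^ n * x⁻¹ * (g ^ n)⁻¹ : Matrix.GeneralLinearGroup (Fin 3) ℂ) :
      Matrix (Fin 3) (Fin 3) ℂ) = 1 - s ^ n • N := by
    intro n
    rw [Units.val_mul, Units.mul_inv_eq_iff_eq_mul, Units.val_mul, hinv, mul_sub, hpow, sub_mul]
    simp
  obtain ⟨a, -, φ, hφ, hlim⟩ := (isCompact_closedBall (0 : ℂ) 1).tendsto_subseq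
    (x := fun n : ℕ => s ^ n) (fun n => by
      simpa using pow_le_one₀ (norm_nonneg s) hs)
  have hlim' : Tendsto (fun n => s ^ (φ (n + 1)) - s ^ (φ n)) atTop (𝓝 0) := by
    have := ((tendsto_add_atTop_iff_nat 1).2 hlim).sub hlim
    simpa using this
  let y : ℕ → Matrix.GeneralLinearGroup (Fin 3) ℂ := fun n =>
    (g ^ φ (n+1) * x * (g ^ φ (n+1))⁻¹) * (g ^ φ n * x⁻¹ * (g ^ φ n)⁻¹)
  have hy : ∀ n, (y n : Matrix (Fin 3) (Fin 3) ℂ) = 1 + (s ^ φ (n+1) - s ^ φ n) • N := by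
    intro n
    simp only [y]
    rw [Units.val_mul, hconj, hconj']
    simp only [add_mul, mul_sub, smul_mul_assoc, mul_smul_comm, hN2, smul_zero, one_mul, mul_one,
      sub_smul]
    abel
  have hyΓ : ∀ n, y n ∈ Γ := fun n =>
    Γ.mul_mem (Γ.mul_mem (Γ.mul_mem (Γ.pow_mem hg _) hx) (Γ.inv_mem (Γ.pow_mem hg _)))
     (Γ.mul_mem (Γ.mul_mem (Γ.pow_mem hg _) (Γ.inv_mem hx)) (Γ.inv_mem (Γ.pow_mem hg _)))
  obtain ⟨n, hn⟩ := aux_disc Γ hdisc y hyΓ (by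
    simp_rw [hy]
    have := (hlim'.smul_const N).const_add 1
    simpa using this)
  have h1 := hy n
  rw [hn, Units.val_one, left_eq_add, smul_eq_zero] at h1
  have h2 := sub_eq_zero.1 (h1.resolve_right hN)
  have hlt : φ n < φ (n+1) := hφ (Nat.lt_succ_self n)
  refine ⟨φ (n+1) - φ n, by omega, ?_⟩
  rw [pow_sub₀ _ hs0 hlt.le, h2]
  exact mul_inv_cancel₀ (pow_ne_zero _ hs0)

theorem aux_all (Γ : Subgroup (Matrix.GeneralLinearGroup (Fin 3) ℂ))
    (hdisc : DiscreteTopology Γ) (x g : Matrix.GeneralLinearGroup (Fin 3) ℂ)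
    (hx : x ∈ Γ) (hg : g ∈ Γ) (N : Matrix (Fin 3) (Fin 3) ℂ) (s : ℂ)
    (hxN : (x : Matrix (Fin 3) (Fin 3) ℂ) = 1 + N) (hN2 : N * N = 0) (hN : N ≠ 0)
    (hc : (g : Matrix (Fin 3) (Fin 3) ℂ) * N = s • (N * (g : Matrix (Fin 3) (Fin 3) ℂ)))
    (hs0 : s ≠ 0) : ∃ k : ℕ, 0 < k ∧ s ^ k = 1 := by
  rcases le_total ‖s‖ 1 with h | h
  · exact aux_le Γ hdisc x g hx hg N s hxN hN2 hN hc hs0 h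
  · obtain ⟨k, hk, hk1⟩ := aux_le Γ hdisc x g⁻¹ hx (Γ.inv_mem hg) N s⁻¹ hxN hN2 hN (by
      rw [Units.inv_mul_eq_iff_eq_mul, mul_smul_comm, ← mul_assoc, hc, smul_mul_assoc, smul_smul,
        inv_mul_cancel₀ hs0, one_smul, mul_assoc, Units.mul_inv, mul_one]) (inv_ne_zero hs0)
      (by rw [norm_inv]; exact inv_le_one_of_one_le₀ h)
    exact ⟨k, hk, by rwa [inv_pow, inv_eq_one] at hk1⟩


/-- A discrete, non-commutative, torsion-free subgroup `Γ ≤ GL(3, ℂ)` of upper triangular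
matrices, such that the multiplicative groups `λ₁₂(Γ)` and `λ₂₃(Γ)` are torsion free,
contains no complex homothety `diag(λ, λ, λ⁻²)` with `|λ| ≠ 1`. -/
theorem stmt_7 (Γ : Subgroup (Matrix.GeneralLinearGroup (Fin 3) ℂ))
    (hdisc : DiscreteTopology Γ)
    (hnoncomm : ¬ ∀ a ∈ Γ, ∀ b ∈ Γ, a * b = b * a)
    (hupper : ∀ γ ∈ Γ, ∀ i j : Fin 3, j < i → (γ : Matrix (Fin 3) (Fin 3) ℂ) i j = 0)
    (htf : ∀ γ ∈ Γ, ∀ n : ℕ, 0 < n → γ ^ n = 1 → γ = 1)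
    (htf12 : ∀ γ ∈ Γ, ∀ n : ℕ, 0 < n →
      ((γ : Matrix (Fin 3) (Fin 3) ℂ) 0 0 / (γ : Matrix (Fin 3) (Fin 3) ℂ) 1 1) ^ n = 1 →
      (γ : Matrix (Fin 3) (Fin 3) ℂ) 0 0 / (γ : Matrix (Fin 3) (Fin 3) ℂ) 1 1 = 1)
    (htf23 : ∀ γ ∈ Γ, ∀ n : ℕ, 0 < n →
      ((γ : Matrix (Fin 3) (Fin 3) ℂ) 1 1 / (γ : Matrix (Fin 3) (Fin 3) ℂ) 2 2) ^ n = 1 →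
      (γ : Matrix (Fin 3) (Fin 3) ℂ) 1 1 / (γ : Matrix (Fin 3) (Fin 3) ℂ) 2 2 = 1) :
    ¬ ∃ γ ∈ Γ, ∃ lam : ℂ, lam ≠ 0 ∧ ‖lam‖ ≠ 1 ∧
      (γ : Matrix (Fin 3) (Fin 3) ℂ) = Matrix.diagonal ![lam, lam, lam⁻¹ ^ 2] := by
  rintro ⟨h, hh, lam, hl0, hl1, hhd⟩
  have hdiag : ∀ g ∈ Γ, ∀ i, (g : Matrix (Fin 3) (Fin 3) ℂ) i i ≠ 0 := by
    intro g hg i hi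
    have hdet : (g : Matrix (Fin 3) (Fin 3) ℂ).det ≠ 0 :=
      ((Matrix.isUnit_iff_isUnit_det _).1 g.isUnit).ne_zero
    apply hdet
    rw [Matrix.det_of_upperTriangular (fun i j hij => hupper g hg i j hij)]
    exact Finset.prod_eq_zero (Finset.mem_univ i) hi
  have key1 : ∀ g ∈ Γ, (g : Matrix (Fin 3) (Fin 3) ℂ) 0 2 = 0 ∧
      (g : Matrix (Fin 3) (Fin 3) ℂ) 1 2 = 0 := by
    intro g hg
    have hl3 : ∀ k : ℕ, 0 < k → (lam ^ 3) ^ k ≠ 1 := by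
      intro k hk h1
      rw [← pow_mul] at h1
      have h2 := congrArg norm h1
      rw [norm_pow, norm_one] at h2
      exact hl1 ((pow_eq_one_iff_of_nonneg (norm_nonneg _) (by omega)).1 h2)
    obtain ⟨k, hk⟩ : ∃ k, k = h * g * h⁻¹ * g⁻¹ := ⟨_, rfl⟩
    have hkΓ : k ∈ Γ := hk ▸ Γ.mul_mem (Γ.mul_mem (Γ.mul_mem hh hg) (Γ.inv_mem hh)) (Γ.inv_mem hg)
    have hkm : h * g = k * g * h := by rw [hk]; group
    have hkm' := congrArg (Units.val) hkm
    simp only [Units.val_mul, hhd] at hkm'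
    have e := fun i j => congrFun (congrFun hkm' i) j
    have ug := hupper g hg
    have uk := hupper k hkΓ
    have dg := hdiag g hg
    have g10 := ug 1 0 (by decide)
    have g20 := ug 2 0 (by decide)
    have g21 := ug 2 1 (by decide)
    have k10 := uk 1 0 (by decide)
    have k20 := uk 2 0 (by decide)
    have k21 := uk 2 1 (by decide)
    have e00 := e 0 0
    have e01 := e 0 1
    have e02 := e 0 2
    have e11 := e 1 1
    have e12 := e 1 2
    have e22 := e 2 2
    simp [Matrix.mul_apply, Fin.sum_univ_three, Matrix.diagonal, g10, g20, g21, k10, k20, k21] at e00 e01 e02 e11 e12 e22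
    have d0 := dg 0
    have d1 := dg 1
    have d2 := dg 2
    have k00 : (k : Matrix (Fin 3) (Fin 3) ℂ) 0 0 = 1 := by
      apply mul_right_cancel₀ (mul_ne_zero d0 hl0); linear_combination -e00
    have k11 : (k : Matrix (Fin 3) (Fin 3) ℂ) 1 1 = 1 := by
      apply mul_right_cancel₀ (mul_ne_zero d1 hl0); linear_combination -e11
    have k22 : (k : Matrix (Fin 3) (Fin 3) ℂ) 2 2 = 1 := by
      apply mul_right_cancel₀ (mul_ne_zero d2 (inv_ne_zero (pow_ne_zero 2 hl0)))
      linear_combination -e22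
    have k01 : (k : Matrix (Fin 3) (Fin 3) ℂ) 0 1 = 0 := by
      apply mul_right_cancel₀ (mul_ne_zero d1 hl0)
      rw [k00] at e01; linear_combination -e01
    have hN1 : (k : Matrix (Fin 3) (Fin 3) ℂ) - 1 = 0 := by
      by_contra hN
      obtain ⟨n, hn, hn1⟩ := aux_all Γ hdisc k h hkΓ hh _ (lam ^ 3) (add_sub_cancel _ _).symm (by
        ext i j
        fin_cases i <;> fin_cases j <;>
          simp [Matrix.mul_apply, Fin.sum_univ_three, k00, k11, k22, k01, k10, k20, k21]) hN (by
        rw [hhd]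
        ext i j
        fin_cases i <;> fin_cases j <;>
          simp [Matrix.mul_apply, Fin.sum_univ_three, Matrix.diagonal, k00, k11, k22, k01, k10, k20, k21] <;> field_simp)
        (pow_ne_zero 3 hl0)
      exact hl3 n hn hn1
    have hk1 := sub_eq_zero.1 hN1
    have hl31 : lam ^ 3 - 1 ≠ 0 := sub_ne_zero.2 (by simpa using hl3 1 one_pos)
    have k02 : (k : Matrix (Fin 3) (Fin 3) ℂ) 0 2 = 0 := by rw [hk1]; simp
    have k12 : (k : Matrix (Fin 3) (Fin 3) ℂ) 1 2 = 0 := by rw [hk1]; simp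
    rw [k00, k01, k02] at e02
    rw [k11, k12] at e12
    field_simp at e02 e12
    constructor
    · apply mul_right_cancel₀ hl31; linear_combination e02
    · apply mul_right_cancel₀ hl31; linear_combination e12
  apply hnoncomm
  by_contra hne
  push Not at hne
  obtain ⟨a, ha, b, hb, hab⟩ := hne
  obtain ⟨u, hu⟩ : ∃ k, k = a * b * a⁻¹ * b⁻¹ := ⟨_, rfl⟩
  have huΓ : u ∈ Γ := hu ▸ Γ.mul_mem (Γ.mul_mem (Γ.mul_mem ha hb) (Γ.inv_mem ha)) (Γ.inv_mem hb)
  have hum : a * b = u * b * a := by rw [hu]; group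
  have hu1 : u ≠ 1 := by
    rintro rfl
    rw [one_mul] at hum
    exact hab hum
  have hum' := congrArg (Units.val) hum
  simp only [Units.val_mul] at hum'
  have e := fun i j => congrFun (congrFun hum' i) j
  have z : ∀ g ∈ Γ, (g : Matrix (Fin 3) (Fin 3) ℂ) 1 0 = 0 ∧ (g : Matrix (Fin 3) (Fin 3) ℂ) 2 0 = 0
      ∧ (g : Matrix (Fin 3) (Fin 3) ℂ) 2 1 = 0 := fun g hg =>
    ⟨hupper g hg _ _ (by decide), hupper g hg _ _ (by decide), hupper g hg _ _ (by decide)⟩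
  obtain ⟨a10, a20, a21⟩ := z a ha
  obtain ⟨b10, b20, b21⟩ := z b hb
  obtain ⟨u10, u20, u21⟩ := z u huΓ
  obtain ⟨a02, a12⟩ := key1 a ha
  obtain ⟨b02, b12⟩ := key1 b hb
  obtain ⟨u02, u12⟩ := key1 u huΓ
  have e00 := e 0 0
  have e11 := e 1 1
  have e22 := e 2 2
  simp only [Matrix.mul_apply, Fin.sum_univ_three, a10, a20, a21, b10, b20, b21, u10, u20, u21,
    a02, a12, b02, b12, u02, u12, mul_zero, zero_mul, add_zero, zero_add] at e00 e11 e22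
  have u00 : (u : Matrix (Fin 3) (Fin 3) ℂ) 0 0 = 1 := by
    apply mul_right_cancel₀ (mul_ne_zero (hdiag a ha 0) (hdiag b hb 0)); linear_combination -e00
  have u11 : (u : Matrix (Fin 3) (Fin 3) ℂ) 1 1 = 1 := by
    apply mul_right_cancel₀ (mul_ne_zero (hdiag a ha 1) (hdiag b hb 1)); linear_combination -e11
  have u22 : (u : Matrix (Fin 3) (Fin 3) ℂ) 2 2 = 1 := by
    apply mul_right_cancel₀ (mul_ne_zero (hdiag a ha 2) (hdiag b hb 2)); linear_combination -e22
  have hN : (u : Matrix (Fin 3) (Fin 3) ℂ) - 1 ≠ 0 := fun h0 => hu1 (Units.ext (sub_eq_zero.1 h0))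
  have key2 : ∀ g ∈ Γ, (g : Matrix (Fin 3) (Fin 3) ℂ) 0 0 = (g : Matrix (Fin 3) (Fin 3) ℂ) 1 1 := by
    intro g hg
    obtain ⟨g10, g20, g21⟩ := z g hg
    obtain ⟨g02, g12⟩ := key1 g hg
    have d1 := hdiag g hg 1
    obtain ⟨n, hn, hn1⟩ := aux_all Γ hdisc u g huΓ hg _
      ((g : Matrix (Fin 3) (Fin 3) ℂ) 0 0 / (g : Matrix (Fin 3) (Fin 3) ℂ) 1 1) (add_sub_cancel _ _).symm (by
        ext i j
        fin_cases i <;> fin_cases j <;>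
          simp [Matrix.mul_apply, Fin.sum_univ_three, u00, u11, u22, u10, u20, u21, u02, u12]) hN (by
        ext i j
        fin_cases i <;> fin_cases j <;>
          simp [Matrix.mul_apply, Fin.sum_univ_three, u00, u11, u22, u10, u20, u21, u02, u12,
            g10, g20, g21, g02, g12] <;> field_simp)
        (div_ne_zero (hdiag g hg 0) d1)
    exact (div_eq_one_iff_eq d1).1 (htf12 g hg n hn hn1)
  apply hab
  apply Units.ext
  have ka := key2 a ha
  have kb := key2 b hb
  ext i j
  fin_cases i <;> fin_cases j <;>
    simp [Matrix.mul_apply, Fin.sum_univ_three, a10, a20, a21, b10, b20, b21,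
      a02, a12, b02, b12, ka, kb] <;> ring
end

section
/- Let W be a discrete additive subgroup of ℂ and let μ : (W,+) → (ℂ∖{0}, ·) be a group homomorphism. Then Γ_{W,μ} is a discrete subgroup of SL(3,ℂ). -/
noncomputable instance : TopologicalSpace (Matrix.SpecialLinearGroup (Fin 3) ℂ) :=
  inferInstanceAs (TopologicalSpace {A : Matrix (Fin 3) (Fin 3) ℂ // A.det = 1})

/-- If `W` is a discrete additive subgroup of `ℂ` and `μ : (W, +) → (ℂ∖{0}, ·)` is a group
homomorphism, then the group `Γ_{W,μ}` of matrices with rows `(μ(w)⁻², 0, 0)`,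
`(0, μ(w), w·μ(w))`, `(0, 0, μ(w))`, for `w ∈ W`, is a discrete subgroup of `SL(3, ℂ)`. -/
theorem stmt_9 (W : AddSubgroup ℂ) (hWdisc : DiscreteTopology W)
    (μ : ℂ → ℂ) (hμ0 : ∀ w ∈ W, μ w ≠ 0)
    (hμmul : ∀ v ∈ W, ∀ w ∈ W, μ (v + w) = μ v * μ w)
    (Γ : Subgroup (Matrix.SpecialLinearGroup (Fin 3) ℂ))
    (hΓ : ∀ g : Matrix.SpecialLinearGroup (Fin 3) ℂ, g ∈ Γ ↔
      ∃ w ∈ W, (g : Matrix (Fin 3) (Fin 3) ℂ) =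
        !![(μ w)⁻¹ ^ 2, 0, 0; 0, μ w, w * μ w; 0, 0, μ w]) :
    DiscreteTopology Γ := by
  have key : ∀ g : Γ, ∃ w ∈ W, ((g : Matrix.SpecialLinearGroup (Fin 3) ℂ) :
      Matrix (Fin 3) (Fin 3) ℂ) =
        !![(μ w)⁻¹ ^ 2, 0, 0; 0, μ w, w * μ w; 0, 0, μ w] := fun g => (hΓ g.1).1 g.2
  choose f hfW hf using key
  have hc : Continuous (fun g : Γ => ((g : Matrix.SpecialLinearGroup (Fin 3) ℂ) :
      Matrix (Fin 3) (Fin 3) ℂ)) :=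
    (continuous_subtype_val (p := fun A : Matrix (Fin 3) (Fin 3) ℂ => A.det = 1)).comp
      continuous_subtype_val
  have h12 : ∀ g : Γ, g.1.1 1 2 = f g * μ (f g) := fun g => by rw [hf g]; simp
  have h22 : ∀ g : Γ, g.1.1 2 2 = μ (f g) := fun g => by rw [hf g]; simp
  have hfeq : f = fun g : Γ => g.1.1 1 2 / g.1.1 2 2 := by
    funext g
    rw [h12, h22, mul_div_cancel_right₀ _ (hμ0 _ (hfW g))]
  have hfc : Continuous f := by
    rw [hfeq]
    refine Continuous.div (hc.matrix_elem 1 2) (hc.matrix_elem 2 2) fun g => ?_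
    rw [h22]
    exact hμ0 _ (hfW g)
  refine DiscreteTopology.of_continuous_injective (β := W) (f := fun g => ⟨f g, hfW g⟩)
    (hfc.subtype_mk _) ?_
  intro a b hab
  have hab' : f a = f b := congrArg Subtype.val hab
  apply Subtype.ext
  apply Subtype.ext
  rw [hf a, hf b, hab']
end

section
/- Let W be an additive subgroup of ℂ and let μ : (W,+) → (ℂ∖{0}, ·) be a group homomorphism. The group Γ_{W,μ} is a discrete subgroup of SL(3,ℂ) if and only if both of the following hold: (1) the rank of W is at most 3, i.e. W contains no four elements that are linearly independent over ℤ; and (2) condition (C): for every sequence (w_k) of pairwise distinct elements of W with w_k → 0, no subsequence of (μ(w_k)) converges in ℂ to a nonzero limit. -/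
open Filter Topology in
theorem aux_inj (w : ℕ → ℂ) (h0 : ∀ n, w n ≠ 0) (hw : Tendsto w atTop (𝓝 0)) :
    ∃ φ : ℕ → ℕ, StrictMono φ ∧ Function.Injective (fun n => w (φ n)) := by
  obtain ⟨φ, -, hφ⟩ := exists_seq_of_forall_finset_exists (fun _ : ℕ => True)
    (fun m n => m < n ∧ ‖w n‖ < ‖w m‖) (by
      intro s _
      have h : ∀ᶠ n in atTop, ∀ x ∈ s, x < n ∧ ‖w n‖ < ‖w x‖ := by
        rw [Filter.eventually_all_finset]
        intro x _
        refine (eventually_gt_atTop x).and ?_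
        have h1 : Tendsto (fun n => ‖w n‖) atTop (𝓝 0) := by simpa using hw.norm
        exact h1.eventually_lt_const (norm_pos_iff.2 (h0 x))
      obtain ⟨n, hn⟩ := h.exists
      exact ⟨n, trivial, hn⟩)
  refine ⟨φ, fun m n h => (hφ m n h).1, ?_⟩
  have : StrictAnti (fun n => ‖w (φ n)‖) := fun m n h => (hφ m n h).2
  intro a b hab
  apply this.injective
  simp only at hab
  simp only [hab]

open Filter Topology in
theorem aux_eps (W : AddSubgroup ℂ)
    (μ : ℂ → ℂ) (hμ0 : ∀ w ∈ W, μ w ≠ 0)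
    (H : ∀ w : ℕ → ℂ, (∀ k, w k ∈ W) → Function.Injective w →
          Filter.Tendsto w Filter.atTop (nhds 0) →
          ∀ φ : ℕ → ℕ, StrictMono φ → ∀ c : ℂ, c ≠ 0 →
            ¬ Filter.Tendsto (fun k => μ (w (φ k))) Filter.atTop (nhds c)) :
    ∃ ε > 0, ∀ w ∈ W, ‖w‖ < ε → |Real.log ‖μ w‖| < ε → w = 0 := by
  by_contra! hc
  choose w hwW hw1 hw2 hw0 using fun n : ℕ => hc (1 / ((n : ℝ) + 1)) (by positivity)
  have hlim := tendsto_one_div_add_atTop_nhds_zero_nat (𝕜 := ℝ)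
  have hw : Tendsto w atTop (𝓝 0) := squeeze_zero_norm (fun n => (hw1 n).le) hlim
  have hl : Tendsto (fun n => Real.log ‖μ (w n)‖) atTop (𝓝 0) :=
    squeeze_zero_norm (fun n => (hw2 n).le) hlim
  have hn : Tendsto (fun n => ‖μ (w n)‖) atTop (𝓝 1) := by
    have := (Real.continuous_exp.tendsto 0).comp hl
    rw [Real.exp_zero] at this
    refine this.congr fun n => ?_
    exact Real.exp_log (norm_pos_iff.2 (hμ0 _ (hwW n)))
  obtain ⟨φ, hφ, hinj⟩ := aux_inj w hw0 hw
  have hn' := hn.comp hφ.tendsto_atTop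
  obtain ⟨c, -, ψ, hψ, hc⟩ := tendsto_subseq_of_frequently_bounded
    (s := Metric.closedBall (0 : ℂ) 2) Metric.isBounded_closedBall (x := fun n => μ (w (φ n)))
    (by
      refine Eventually.frequently ?_
      filter_upwards [hn'.eventually_lt_const (show (1 : ℝ) < 2 by norm_num)] with n h
      simpa using h.le)
  have hcn : ‖c‖ = 1 := tendsto_nhds_unique hc.norm (hn'.comp hψ.tendsto_atTop)
  refine H (fun n => w (φ n)) (fun k => hwW _) hinj (hw.comp hφ.tendsto_atTop) ψ hψ c ?_ hc
  rintro rfl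
  simp at hcn

theorem aux_rank (W : AddSubgroup ℂ)
    (μ : ℂ → ℂ) (hμ0 : ∀ w ∈ W, μ w ≠ 0)
    (hμmul : ∀ v ∈ W, ∀ w ∈ W, μ (v + w) = μ v * μ w)
    (H : ∃ ε > 0, ∀ w ∈ W, ‖w‖ < ε → |Real.log ‖μ w‖| < ε → w = 0) :
    ¬ ∃ v : Fin 4 → ℂ, (∀ i, v i ∈ W) ∧ LinearIndependent ℤ v := by
  rintro ⟨v, hv, hli⟩
  obtain ⟨ε, hε, H⟩ := H
  let L : W →+ ℂ × ℝ := AddMonoidHom.mk' (fun w => ((w : ℂ), Real.log ‖μ w‖)) (by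
    intro a b
    ext1
    · simp
    · simp only [AddSubgroup.coe_add, Prod.snd_add]
      rw [hμmul _ a.2 _ b.2, norm_mul, Real.log_mul]
      · simpa using hμ0 _ a.2
      · simpa using hμ0 _ b.2)
  have hL : ∀ w : W, L w = ((w : ℂ), Real.log ‖μ w‖) := fun _ => rfl
  let u : Fin 4 → ℂ × ℝ := fun i => L ⟨v i, hv i⟩
  have hu : LinearIndependent ℤ u :=
    LinearIndependent.of_comp (AddMonoidHom.fst ℂ ℝ).toIntLinearMap hli
  have hle : Submodule.span ℤ (Set.range u) ≤ LinearMap.range L.toIntLinearMap := by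
    rw [Submodule.span_le]
    rintro _ ⟨i, rfl⟩
    exact ⟨⟨v i, hv i⟩, rfl⟩
  have hd : DiscreteTopology (Submodule.span ℤ (Set.range u)) := by
    apply discreteTopology_of_isOpen_singleton_zero
    rw [Metric.isOpen_singleton_iff]
    refine ⟨ε, hε, ?_⟩
    rintro ⟨y, hy⟩ hdist
    obtain ⟨w, hw⟩ := hle hy
    have hw' : y = ((w : ℂ), Real.log ‖μ w‖) := hw.symm
    subst hw'
    have h1 : ‖(((w : ℂ), Real.log ‖μ w‖) : ℂ × ℝ)‖ < ε := by simpa using hdist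
    rw [Prod.norm_def, max_lt_iff] at h1
    have hw0 : w = 0 := Subtype.ext (H _ w.2 h1.1 h1.2)
    apply Subtype.ext
    change L w = 0
    rw [hw0, map_zero]
  have h1 := Real.finrank_eq_int_finrank_of_discrete hd
  have h2 : Set.finrank ℤ (Set.range u) = 4 := by
    have h := finrank_span_eq_card hu
    rw [Fintype.card_fin] at h
    exact h
  have h3 : Set.finrank ℝ (Set.range u) ≤ Module.finrank ℝ (ℂ × ℝ) := Submodule.finrank_le _
  have h4 : Module.finrank ℝ (ℂ × ℝ) = 3 := by
    rw [Module.finrank_prod, Complex.finrank_real_complex, Module.finrank_self]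
  omega

/-- `Γ_{W,μ}` is a discrete subgroup of `SL(3, ℂ)` if and only if (1) `W` has rank at most
`3`, i.e. `W` contains no four elements that are `ℤ`-linearly independent, and (2) for every
sequence of pairwise distinct elements of `W` tending to `0`, no subsequence of its image
under `μ` converges in `ℂ` to a nonzero limit. -/
theorem stmt_10 (W : AddSubgroup ℂ)
    (μ : ℂ → ℂ) (hμ0 : ∀ w ∈ W, μ w ≠ 0)
    (hμmul : ∀ v ∈ W, ∀ w ∈ W, μ (v + w) = μ v * μ w)
    (Γ : Subgroup (Matrix.SpecialLinearGroup (Fin 3) ℂ))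
    (hΓ : ∀ g : Matrix.SpecialLinearGroup (Fin 3) ℂ, g ∈ Γ ↔
      ∃ w ∈ W, (g : Matrix (Fin 3) (Fin 3) ℂ) =
        !![(μ w)⁻¹ ^ 2, 0, 0; 0, μ w, w * μ w; 0, 0, μ w]) :
    DiscreteTopology Γ ↔
      ((¬ ∃ v : Fin 4 → ℂ, (∀ i, v i ∈ W) ∧ LinearIndependent ℤ v) ∧
        (∀ w : ℕ → ℂ, (∀ k, w k ∈ W) → Function.Injective w →
          Filter.Tendsto w Filter.atTop (nhds 0) →
          ∀ φ : ℕ → ℕ, StrictMono φ → ∀ c : ℂ, c ≠ 0 →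
            ¬ Filter.Tendsto (fun k => μ (w (φ k))) Filter.atTop (nhds c))) := by
  have hμz : μ 0 = 1 := by
    have h := hμmul 0 W.zero_mem 0 W.zero_mem
    rw [add_zero] at h
    exact (mul_eq_left₀ (hμ0 0 W.zero_mem)).1 h.symm
  have hμneg : ∀ w ∈ W, μ (-w) = (μ w)⁻¹ := by
    intro w hw
    have h := hμmul w hw (-w) (W.neg_mem hw)
    rw [add_neg_cancel, hμz] at h
    exact eq_inv_of_mul_eq_one_right h.symm
  constructor
  · intro hdisc
    have H : ∀ w : ℕ → ℂ, (∀ k, w k ∈ W) → Function.Injective w →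
          Filter.Tendsto w Filter.atTop (nhds 0) →
          ∀ φ : ℕ → ℕ, StrictMono φ → ∀ c : ℂ, c ≠ 0 →
            ¬ Filter.Tendsto (fun k => μ (w (φ k))) Filter.atTop (nhds c) := by
      intro w hwW hinj hw φ hφ c hc hlim
      let d : ℕ → ℂ := fun k => w (φ (k + 1)) + -w (φ k)
      have hdW : ∀ k, d k ∈ W := fun k => W.add_mem (hwW _) (W.neg_mem (hwW _))
      have hd0 : ∀ k, d k ≠ 0 := by
        intro k h
        have := hφ.injective (hinj (add_neg_eq_zero.1 h))
        omega
      have hw' := hw.comp hφ.tendsto_atTop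
      have hdl : Filter.Tendsto d Filter.atTop (nhds 0) := by
        have := (hw'.comp (Filter.tendsto_add_atTop_nat 1)).add hw'.neg
        simpa using this
      have hμd : Filter.Tendsto (fun k => μ (d k)) Filter.atTop (nhds 1) := by
        have := (hlim.comp (Filter.tendsto_add_atTop_nat 1)).mul (hlim.inv₀ hc)
        rw [mul_inv_cancel₀ hc] at this
        refine this.congr fun k => ?_
        simp only [d, Function.comp]
        rw [hμmul _ (hwW _) _ (W.neg_mem (hwW _)), hμneg _ (hwW _)]
      have hdet : ∀ k, (!![(μ (d k))⁻¹ ^ 2, 0, 0; 0, μ (d k), d k * μ (d k); 0, 0, μ (d k)] :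
          Matrix (Fin 3) (Fin 3) ℂ).det = 1 := by
        intro k
        have := hμ0 _ (hdW k)
        rw [Matrix.det_fin_three]
        simp
        field_simp
      let g : ℕ → Γ := fun k => ⟨⟨_, hdet k⟩, (hΓ _).2 ⟨d k, hdW k, rfl⟩⟩
      have hg : Filter.Tendsto g Filter.atTop (nhds 1) := by
        rw [tendsto_subtype_rng]
        refine tendsto_subtype_rng.2 ?_
        refine tendsto_pi_nhds.2 fun i => tendsto_pi_nhds.2 fun j => ?_
        have h1 : Filter.Tendsto (fun k => (μ (d k))⁻¹ ^ 2) Filter.atTop (nhds 1) := by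
          simpa using (hμd.inv₀ one_ne_zero).pow 2
        have h2 : Filter.Tendsto (fun k => d k * μ (d k)) Filter.atTop (nhds 0) := by
          simpa using hdl.mul hμd
        fin_cases i <;> fin_cases j <;>
          first
          | exact h1
          | exact h2
          | exact hμd
          | exact tendsto_const_nhds
      rw [nhds_discrete, Filter.tendsto_pure] at hg
      obtain ⟨k, hk⟩ := hg.exists
      have hk' : d k * μ (d k) = 0 :=
        congrArg (fun x : Γ => (x : Matrix.SpecialLinearGroup (Fin 3) ℂ).1 1 2) hk
      exact (mul_ne_zero (hd0 k) (hμ0 _ (hdW k))) hk'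
    exact ⟨aux_rank W μ hμ0 hμmul (aux_eps W μ hμ0 H), H⟩
  · rintro ⟨-, H⟩
    obtain ⟨ε, hε, H⟩ := aux_eps W μ hμ0 H
    have hent : ∀ i j, Continuous (fun x : Γ => (x : Matrix.SpecialLinearGroup (Fin 3) ℂ).1 i j) := by
      intro i j
      have h1 : Continuous (fun x : Γ => (x : Matrix.SpecialLinearGroup (Fin 3) ℂ)) :=
        continuous_subtype_val
      have h2 : Continuous (fun x : Matrix.SpecialLinearGroup (Fin 3) ℂ => x.1) :=
        continuous_subtype_val
      exact (continuous_apply_apply i j).comp (h2.comp h1)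
    have hne : ∀ x : Γ, (x : Matrix.SpecialLinearGroup (Fin 3) ℂ).1 1 1 ≠ 0 := by
      intro x
      obtain ⟨w, hw, he⟩ := (hΓ x).1 x.2
      rw [he]
      simpa using hμ0 w hw
    let p : Γ → ℂ := fun x => (x : Matrix.SpecialLinearGroup (Fin 3) ℂ).1 1 2 /
      (x : Matrix.SpecialLinearGroup (Fin 3) ℂ).1 1 1
    let q : Γ → ℝ := fun x => Real.log ‖(x : Matrix.SpecialLinearGroup (Fin 3) ℂ).1 1 1‖
    have hp : Continuous p := (hent 1 2).div (hent 1 1) hne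
    have hq : Continuous q := (hent 1 1).norm.log (fun x => by simpa using hne x)
    have key : ∀ x : Γ, ∃ w ∈ W, p x = w ∧ q x = Real.log ‖μ w‖ ∧
        (x : Matrix.SpecialLinearGroup (Fin 3) ℂ).1 =
          !![(μ w)⁻¹ ^ 2, 0, 0; 0, μ w, w * μ w; 0, 0, μ w] := by
      intro x
      obtain ⟨w, hw, he⟩ := (hΓ x).1 x.2
      refine ⟨w, hw, ?_, ?_, he⟩
      · simp only [p]
        rw [he]
        have := hμ0 w hw
        simp [this]
      · simp only [q]
        rw [he]
        simp
    rw [discreteTopology_iff_isOpen_singleton]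
    intro a
    have hopen : IsOpen {x : Γ | ‖p x - p a‖ < ε ∧ |q x - q a| < ε} :=
      (isOpen_lt (hp.sub continuous_const).norm continuous_const).inter
        (isOpen_lt (hq.sub continuous_const).abs continuous_const)
    convert hopen using 1
    ext x
    constructor
    · rintro rfl
      simp [hε]
    · rintro ⟨h1, h2⟩
      obtain ⟨w, hw, hpx, hqx, hx⟩ := key x
      obtain ⟨v, hv, hpa, hqa, ha⟩ := key a
      rw [hpx, hpa] at h1
      rw [hqx, hqa] at h2
      have h3 : w + -v = 0 := by
        refine H _ (W.add_mem hw (W.neg_mem hv)) (by simpa [sub_eq_add_neg] using h1) ?_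
        rw [hμmul _ hw _ (W.neg_mem hv), hμneg _ hv, norm_mul, norm_inv, Real.log_mul, Real.log_inv]
        · simpa [sub_eq_add_neg] using h2
        · simpa using hμ0 w hw
        · simpa using hμ0 v hv
      have h4 : w = v := add_neg_eq_zero.1 h3
      subst h4
      exact Subtype.ext (Subtype.ext (hx.trans ha.symm))
end

section
/- Let (x₁,y₁), (x₂,y₂) ∈ ℂ², not both zero, and suppose W = ℤ(x₁,y₁) + ℤ(x₂,y₂) is a discrete additive subgroup of ℂ². Let Γ ≤ GL(3,ℂ) be the subgroup of all matrices with rows (1, x, y), (0, 1, 0), (0, 0, 1) for (x,y) ∈ W. Then there exists A ∈ GL(3,ℂ) such that A Γ A⁻¹ is one of the following groups: (i) the group generated by u₁₂(1) and u₁₃(1); (ii) the group generated by u₁₃(1) and u₁₃(y) for some y ∈ ℂ∖ℝ; (iii) the group generated by u₁₂(1) and u₁₂(x) for some x ∈ ℂ∖ℝ; (iv) the group generated by u₁₂(1); (v) the group generated by u₁₃(1). Here u₁₂(t) denotes the matrix with rows (1, t, 0), (0,1,0), (0,0,1) and u₁₃(t) the matrix with rows (1, 0, t), (0,1,0), (0,0,1).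 -/
/-- The unipotent matrix with first row `(1, x, y)`. -/
def uu (p : ℂ × ℂ) : Matrix.GeneralLinearGroup (Fin 3) ℂ where
  val := !![1, p.1, p.2; 0, 1, 0; 0, 0, 1]
  inv := !![1, -p.1, -p.2; 0, 1, 0; 0, 0, 1]
  val_inv := by
    ext i j; fin_cases i <;> fin_cases j <;> simp [Matrix.mul_apply, Fin.sum_univ_three]
  inv_val := by
    ext i j; fin_cases i <;> fin_cases j <;> simp [Matrix.mul_apply, Fin.sum_univ_three]

theorem uu_val (p : ℂ × ℂ) : (uu p : Matrix (Fin 3) (Fin 3) ℂ) =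
    !![1, p.1, p.2; 0, 1, 0; 0, 0, 1] := rfl

theorem uu_add (p q : ℂ × ℂ) : uu (p + q) = uu p * uu q := by
  apply Units.ext
  rw [Units.val_mul, uu_val, uu_val, uu_val]
  ext i j
  fin_cases i <;> fin_cases j <;> simp [Matrix.mul_apply, Fin.sum_univ_three, add_comm]

theorem uu_zero : uu 0 = 1 := by
  have h := uu_add 0 0
  simpa using h

theorem uu_neg (p : ℂ × ℂ) : uu (-p) = (uu p)⁻¹ := by
  rw [eq_inv_iff_mul_eq_one, ← uu_add, neg_add_cancel, uu_zero]

theorem gamma_eq (S : Set (ℂ × ℂ)) (Γ : Subgroup (Matrix.GeneralLinearGroup (Fin 3) ℂ))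
    (hΓ : ∀ g, g ∈ Γ ↔ ∃ x y : ℂ, (x, y) ∈ AddSubgroup.closure S ∧
      (g : Matrix (Fin 3) (Fin 3) ℂ) = !![1, x, y; 0, 1, 0; 0, 0, 1]) :
    Γ = Subgroup.closure (uu '' S) := by
  apply le_antisymm
  · intro g hg
    obtain ⟨x, y, hxy, he⟩ := (hΓ g).1 hg
    have : g = uu (x, y) := Units.ext he
    rw [this]
    clear he this
    generalize ((x, y) : ℂ × ℂ) = p0 at hxy ⊢
    induction hxy using AddSubgroup.closure_induction with
    | mem p hp => exact Subgroup.subset_closure ⟨p, hp, rfl⟩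
    | zero => rw [uu_zero]; exact one_mem _
    | add p q _ _ h1 h2 => rw [uu_add]; exact mul_mem h1 h2
    | neg p _ h => rw [uu_neg]; exact inv_mem h
  · rw [Subgroup.closure_le]
    rintro _ ⟨p, hp, rfl⟩
    exact (hΓ _).2 ⟨p.1, p.2, AddSubgroup.subset_closure hp, rfl⟩

theorem exists_conj (a b c d : ℂ) (hdet : a * d - b * c ≠ 0) :
    ∃ A : Matrix.GeneralLinearGroup (Fin 3) ℂ, ∀ x y : ℂ,
      A * uu (x * a + y * c, x * b + y * d) * A⁻¹ = uu (x, y) := by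
  refine ⟨Matrix.GeneralLinearGroup.mkOfDetNeZero !![1, 0, 0; 0, a, b; 0, c, d] ?_, ?_⟩
  · rw [Matrix.det_fin_three]
    simpa using hdet
  · intro x y
    rw [mul_inv_eq_iff_eq_mul]
    apply Units.ext
    rw [Units.val_mul, Units.val_mul, uu_val, uu_val]
    ext i j
    fin_cases i <;> fin_cases j <;>
      simp [Matrix.mul_apply, Fin.sum_univ_three, Matrix.GeneralLinearGroup.mkOfDetNeZero]

theorem map_conj_eq (S : Set (ℂ × ℂ)) (A : Matrix.GeneralLinearGroup (Fin 3) ℂ) :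
    Subgroup.map (MulAut.conj A).toMonoidHom (Subgroup.closure (uu '' S)) =
      Subgroup.closure ((fun p => A * uu p * A⁻¹) '' S) := by
  rw [MonoidHom.map_closure, Set.image_image]
  rfl

theorem exists_compl (a b : ℂ) (h : (a, b) ≠ (0, 0)) : ∃ c d : ℂ, a * d - b * c ≠ 0 := by
  by_cases ha : a = 0
  · refine ⟨1, 0, ?_⟩
    subst ha
    intro hb
    apply h
    simp at hb
    rw [hb]
  · exact ⟨0, 1, by simpa using ha⟩

/-- cyclic case -/
theorem cyclic_case (v : ℂ × ℂ) (hv : v ≠ 0) :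
    ∃ A : Matrix.GeneralLinearGroup (Fin 3) ℂ,
      Subgroup.map (MulAut.conj A).toMonoidHom (Subgroup.closure (uu '' {v})) =
        Subgroup.closure {uu (1, 0)} := by
  obtain ⟨a, b⟩ := v
  obtain ⟨c, d, hd⟩ := exists_compl a b hv
  obtain ⟨A, hA⟩ := exists_conj a b c d hd
  refine ⟨A, ?_⟩
  rw [map_conj_eq, Set.image_singleton]
  have := hA 1 0
  simp only [one_mul, zero_mul, add_zero] at this
  rw [this]

theorem real_case (v : ℂ × ℂ) (r : ℝ) (S : Set (ℂ × ℂ)) (hv : v ≠ 0) (hS : S = {v, r • v})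
    (hd : DiscreteTopology (AddSubgroup.closure S)) :
    ∃ w : ℂ × ℂ, w ≠ 0 ∧ AddSubgroup.closure S = AddSubgroup.closure {w} := by
  set W := AddSubgroup.closure S with hW
  let f : ℝ →+ ℂ × ℂ := (LinearMap.toSpanSingleton ℝ (ℂ × ℂ) v).toAddMonoidHom
  have hf : ∀ t, f t = t • v := fun t => rfl
  have hcont : Continuous f := by
    have : (f : ℝ → ℂ × ℂ) = fun t => t • v := rfl
    rw [this]; fun_prop
  have hvW : v ∈ W := AddSubgroup.subset_closure (by simp [hS])
  have hrW : r • v ∈ W := AddSubgroup.subset_closure (by simp [hS])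
  obtain ⟨U, hU, hU0⟩ : ∃ U : Set (ℂ × ℂ), IsOpen U ∧ U ∩ (W : Set (ℂ × ℂ)) = {0} := by
    have h1 : IsOpen ({0} : Set W) := isOpen_discrete _
    obtain ⟨U, hU, h2⟩ := isOpen_induced_iff.1 h1
    refine ⟨U, hU, ?_⟩
    ext x
    constructor
    · rintro ⟨hx, hxW⟩
      have : (⟨x, hxW⟩ : W) ∈ ((↑) ⁻¹' U : Set W) := hx
      rw [h2] at this
      simpa using congrArg Subtype.val (Set.mem_singleton_iff.1 this)
    · rintro rfl
      refine ⟨?_, W.zero_mem⟩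
      have : (0 : W) ∈ ((↑) ⁻¹' U : Set W) := by rw [h2]; rfl
      exact this
  have h0U : (0 : ℂ × ℂ) ∈ U := by
    have : (0 : ℂ × ℂ) ∈ U ∩ (W : Set (ℂ × ℂ)) := by rw [hU0]; rfl
    exact this.1
  have hop : IsOpen (f ⁻¹' U) := hU.preimage hcont
  obtain ⟨ε, hε, hball⟩ := Metric.isOpen_iff.1 hop 0 (by simpa using h0U)
  have hdis : Disjoint ((W.comap f : AddSubgroup ℝ) : Set ℝ) (Set.Ioo 0 ε) := by
    rw [Set.disjoint_left]
    rintro t ht ⟨h1, h2⟩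
    have h3 : f t ∈ U := hball (by simp [abs_of_pos h1, h2])
    have h4 : f t ∈ U ∩ (W : Set (ℂ × ℂ)) := ⟨h3, ht⟩
    rw [hU0, Set.mem_singleton_iff, hf, smul_eq_zero] at h4
    rcases h4 with h4 | h4
    · exact h1.ne' h4
    · exact hv h4
  obtain ⟨g, hg⟩ := AddSubgroup.cyclic_of_isolated_zero hε hdis
  have hmem : ∀ t : ℝ, t • v ∈ W → t • v ∈ AddSubgroup.closure {g • v} := by
    intro t ht
    have : t ∈ W.comap f := ht
    rw [hg, AddSubgroup.mem_closure_singleton] at this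
    obtain ⟨n, rfl⟩ := this
    rw [AddSubgroup.mem_closure_singleton]
    exact ⟨n, (smul_assoc n g v).symm⟩
  have hcl : W = AddSubgroup.closure {g • v} := by
    apply le_antisymm
    · rw [hW, AddSubgroup.closure_le, hS]
      rintro x (rfl | rfl)
      · simpa using hmem 1 (by simpa using hvW)
      · exact hmem r hrW
    · rw [AddSubgroup.closure_le, Set.singleton_subset_iff]
      have : g ∈ W.comap f := by rw [hg]; exact AddSubgroup.subset_closure rfl
      exact this
  refine ⟨g • v, ?_, hcl⟩
  intro h
  rw [hcl, h] at hvW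
  rw [AddSubgroup.mem_closure_singleton] at hvW
  obtain ⟨n, hn⟩ := hvW
  exact hv (by simpa using hn.symm)

/-- Classification up to conjugation of the discrete groups of unipotent matrices
`(1, x, y; 0, 1, 0; 0, 0, 1)` with `(x, y)` ranging over a discrete additive subgroup
`W = ℤ(x₁,y₁) + ℤ(x₂,y₂)` of `ℂ²`: each such group is conjugate to one of five models. -/
theorem stmt_14 (x₁ y₁ x₂ y₂ : ℂ)
    (hne : ¬ ((x₁, y₁) = ((0 : ℂ), (0 : ℂ)) ∧ (x₂, y₂) = ((0 : ℂ), (0 : ℂ))))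
    (hWdisc : DiscreteTopology
      (AddSubgroup.closure {((x₁ : ℂ), (y₁ : ℂ)), (x₂, y₂)} : AddSubgroup (ℂ × ℂ)))
    (Γ : Subgroup (Matrix.GeneralLinearGroup (Fin 3) ℂ))
    (hΓ : ∀ g, g ∈ Γ ↔ ∃ x y : ℂ,
      (x, y) ∈ (AddSubgroup.closure {((x₁ : ℂ), (y₁ : ℂ)), (x₂, y₂)} : AddSubgroup (ℂ × ℂ)) ∧
      (g : Matrix (Fin 3) (Fin 3) ℂ) = !![1, x, y; 0, 1, 0; 0, 0, 1]) :
    ∃ A : Matrix.GeneralLinearGroup (Fin 3) ℂ,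
      (∃ g h : Matrix.GeneralLinearGroup (Fin 3) ℂ,
        (g : Matrix (Fin 3) (Fin 3) ℂ) = !![1, 1, 0; 0, 1, 0; 0, 0, 1] ∧
        (h : Matrix (Fin 3) (Fin 3) ℂ) = !![1, 0, 1; 0, 1, 0; 0, 0, 1] ∧
        Subgroup.map (MulAut.conj A).toMonoidHom Γ = Subgroup.closure {g, h}) ∨
      (∃ (g h : Matrix.GeneralLinearGroup (Fin 3) ℂ) (y : ℂ), y.im ≠ 0 ∧
        (g : Matrix (Fin 3) (Fin 3) ℂ) = !![1, 0, 1; 0, 1, 0; 0, 0, 1] ∧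
        (h : Matrix (Fin 3) (Fin 3) ℂ) = !![1, 0, y; 0, 1, 0; 0, 0, 1] ∧
        Subgroup.map (MulAut.conj A).toMonoidHom Γ = Subgroup.closure {g, h}) ∨
      (∃ (g h : Matrix.GeneralLinearGroup (Fin 3) ℂ) (x : ℂ), x.im ≠ 0 ∧
        (g : Matrix (Fin 3) (Fin 3) ℂ) = !![1, 1, 0; 0, 1, 0; 0, 0, 1] ∧
        (h : Matrix (Fin 3) (Fin 3) ℂ) = !![1, x, 0; 0, 1, 0; 0, 0, 1] ∧
        Subgroup.map (MulAut.conj A).toMonoidHom Γ = Subgroup.closure {g, h}) ∨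
      (∃ g : Matrix.GeneralLinearGroup (Fin 3) ℂ,
        (g : Matrix (Fin 3) (Fin 3) ℂ) = !![1, 1, 0; 0, 1, 0; 0, 0, 1] ∧
        Subgroup.map (MulAut.conj A).toMonoidHom Γ = Subgroup.closure {g}) ∨
      (∃ g : Matrix.GeneralLinearGroup (Fin 3) ℂ,
        (g : Matrix (Fin 3) (Fin 3) ℂ) = !![1, 0, 1; 0, 1, 0; 0, 0, 1] ∧
        Subgroup.map (MulAut.conj A).toMonoidHom Γ = Subgroup.closure {g}) := by
  have cyc : ∀ w : ℂ × ℂ, w ≠ 0 →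
      AddSubgroup.closure {((x₁ : ℂ), (y₁ : ℂ)), (x₂, y₂)} = AddSubgroup.closure {w} →
      ∃ A : Matrix.GeneralLinearGroup (Fin 3) ℂ, Subgroup.map (MulAut.conj A).toMonoidHom Γ =
        Subgroup.closure {uu (1, 0)} := by
    intro w hw he
    rw [he] at hΓ
    rw [gamma_eq _ Γ hΓ]
    exact cyclic_case w hw
  by_cases h1 : ((x₁ : ℂ), (y₁ : ℂ)) = 0
  · have h2 : ((x₂ : ℂ), (y₂ : ℂ)) ≠ 0 := fun h => hne ⟨h1, h⟩
    obtain ⟨A, hA⟩ := cyc _ h2 (by rw [h1]; simp)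
    exact ⟨A, Or.inr (Or.inr (Or.inr (Or.inl ⟨uu (1, 0), rfl, hA⟩)))⟩
  by_cases hdet : x₁ * y₂ - y₁ * x₂ = 0
  · obtain ⟨c, hc⟩ : ∃ c : ℂ, (x₂, y₂) = c • (x₁, y₁) := by
      by_cases hx : x₁ = 0
      · have hy : y₁ ≠ 0 := fun hy => h1 (by rw [hx, hy]; rfl)
        refine ⟨y₂ / y₁, ?_⟩
        subst hx
        have : x₂ = 0 := by simpa [hy] using hdet
        simp [this, hy]
      · refine ⟨x₂ / x₁, ?_⟩
        ext
        · simp [hx]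
        · simp only [Prod.smul_mk, smul_eq_mul]
          field_simp
          linear_combination hdet
    by_cases him : c.im = 0
    · have hcr : c = (c.re : ℂ) := by apply Complex.ext <;> simp [him]
      have hS : ({((x₁ : ℂ), (y₁ : ℂ)), (x₂, y₂)} : Set (ℂ × ℂ)) =
          {(x₁, y₁), c.re • (x₁, y₁)} := by
        rw [hc, hcr]; simp
      obtain ⟨w, hw, he⟩ := real_case _ c.re _ h1 hS hWdisc
      obtain ⟨A, hA⟩ := cyc w hw he
      exact ⟨A, Or.inr (Or.inr (Or.inr (Or.inl ⟨uu (1, 0), rfl, hA⟩)))⟩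
    · obtain ⟨p, q, hd⟩ := exists_compl x₁ y₁ h1
      obtain ⟨A, hA⟩ := exists_conj x₁ y₁ p q hd
      refine ⟨A, Or.inr (Or.inr (Or.inl ⟨uu (1, 0), uu (c, 0), c, him, rfl, rfl, ?_⟩))⟩
      rw [gamma_eq _ Γ hΓ, map_conj_eq, Set.image_pair, hc]
      have e1 := hA 1 0
      have e2 := hA c 0
      simp only [one_mul, zero_mul, add_zero] at e1 e2
      simp only [Prod.smul_mk, smul_eq_mul]
      rw [e1, e2]
  · obtain ⟨A, hA⟩ := exists_conj x₁ y₁ x₂ y₂ hdet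
    refine ⟨A, Or.inl ⟨uu (1, 0), uu (0, 1), rfl, rfl, ?_⟩⟩
    rw [gamma_eq _ Γ hΓ, map_conj_eq, Set.image_pair]
    have e1 := hA 1 0
    have e2 := hA 0 1
    simp only [one_mul, zero_mul, add_zero, zero_add] at e1 e2
    rw [e1, e2]
end

section
/- Let (a_n)_{n≥1} be a nondecreasing sequence of positive real numbers with a_n → ∞, and let δ ≥ 0 be its exponent of convergence, i.e. the series Σ_n e^{−s·a_n} converges for every s > δ and diverges for every s < δ. Then there exists a continuous nondecreasing function h : (0,∞) → (0,∞) such that the series Σ_n e^{−s·a_n}·h(e^{a_n}) converges for every s > δ and diverges for every s ≤ δ. -/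
/-- Patterson's modification lemma: if `(a n)` is a nondecreasing sequence of positive
reals tending to `∞` whose Dirichlet series `Σ e^{-s·aₙ}` has exponent of convergence
`δ ≥ 0`, then there is a continuous nondecreasing `h : (0,∞) → (0,∞)` such that
`Σ e^{-s·aₙ}·h(e^{aₙ})` converges for `s > δ` and diverges for `s ≤ δ`. -/
theorem stmt_16 (a : ℕ → ℝ) (ha_pos : ∀ n, 0 < a n) (ha_mono : Monotone a)
    (ha_top : Filter.Tendsto a Filter.atTop Filter.atTop)
    (δ : ℝ) (hδ : 0 ≤ δ)
    (hconv : ∀ s : ℝ, δ < s → Summable (fun n => Real.exp (-s * a n)))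
    (hdiv : ∀ s : ℝ, s < δ → ¬ Summable (fun n => Real.exp (-s * a n))) :
    ∃ h : ℝ → ℝ,
      ContinuousOn h (Set.Ioi 0) ∧
      MonotoneOn h (Set.Ioi 0) ∧
      (∀ x ∈ Set.Ioi (0 : ℝ), 0 < h x) ∧
      (∀ s : ℝ, δ < s → Summable (fun n => Real.exp (-s * a n) * h (Real.exp (a n)))) ∧
      (∀ s : ℝ, s ≤ δ → ¬ Summable (fun n => Real.exp (-s * a n) * h (Real.exp (a n)))) := by
  have hN : ∀ k : ℕ, ∃ N : ℕ, (k : ℝ) ≤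
      ∑ n ∈ Finset.range N, Real.exp (-(δ - 1 / ((k : ℝ) + 1)) * a n) := by
    intro k
    have h1 : δ - 1 / ((k : ℝ) + 1) < δ := by
      have : (0 : ℝ) < 1 / ((k : ℝ) + 1) := by positivity
      linarith
    have h2 := (not_summable_iff_tendsto_nat_atTop_of_nonneg
      (fun n => (Real.exp_pos _).le)).1 (hdiv _ h1)
    exact (h2.eventually_ge_atTop (k : ℝ)).exists
  choose N hN using hN
  set C : ℕ → ℝ := fun j => ∑ i ∈ Finset.range j, a (N i) with hC
  have hC0 : ∀ j, 0 ≤ C j := fun j => Finset.sum_nonneg (fun i _ => (ha_pos _).le)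
  have hCk : ∀ k j, k < j → a (N k) ≤ C j := fun k j hkj =>
    Finset.single_le_sum (f := fun i => a (N i)) (fun i _ => (ha_pos _).le)
      (Finset.mem_range.2 hkj)
  set φ : ℝ → ℝ := fun t => ⨅ k : ℕ, (1 / ((k : ℝ) + 1) * t + C k) with hφ
  have hk0 : ∀ k : ℕ, (0 : ℝ) < 1 / ((k : ℝ) + 1) := fun k => by positivity
  have hk1 : ∀ k : ℕ, 1 / ((k : ℝ) + 1) ≤ 1 := fun k => by
    rw [div_le_one (by positivity)]
    have : (0 : ℝ) ≤ k := k.cast_nonneg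
    linarith
  have hbdd : ∀ t : ℝ, BddBelow (Set.range fun k : ℕ => (1 / ((k : ℝ) + 1) * t + C k)) := by
    intro t
    refine ⟨-|t|, ?_⟩
    rintro _ ⟨k, rfl⟩
    have h1 := neg_abs_le t
    have h2 : 1 / ((k : ℝ) + 1) * |t| ≤ 1 * |t| :=
      mul_le_mul_of_nonneg_right (hk1 k) (abs_nonneg t)
    have h3 := mul_le_mul_of_nonneg_left h1 (hk0 k).le
    have h4 := hC0 k
    show -|t| ≤ 1 / ((k : ℝ) + 1) * t + C k
    linarith
  have hle : ∀ (t : ℝ) (k : ℕ), φ t ≤ 1 / ((k : ℝ) + 1) * t + C k :=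
    fun t k => ciInf_le (hbdd t) k
  have hmono : Monotone φ := by
    intro x y hxy
    refine le_ciInf fun k => (hle x k).trans ?_
    have := mul_le_mul_of_nonneg_left hxy (hk0 k).le
    linarith
  have hcont : Continuous φ := by
    refine (LipschitzWith.of_le_add (f := φ) fun x y => ?_).continuous
    rw [← sub_le_iff_le_add]
    refine le_ciInf fun k => ?_
    have h1 := hle x k
    have h2 : 1 / ((k : ℝ) + 1) * (x - y) ≤ dist x y := by
      rw [Real.dist_eq]
      have h3 := mul_le_mul_of_nonneg_left (le_abs_self (x - y)) (hk0 k).le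
      have h4 := mul_le_mul_of_nonneg_right (hk1 k) (abs_nonneg (x - y))
      linarith
    rw [mul_sub] at h2
    linarith
  have hlow : ∀ k n, n < N k → 1 / ((k : ℝ) + 1) * a n ≤ φ (a n) := by
    intro k n hn
    refine le_ciInf fun j => ?_
    rcases lt_or_ge k j with hkj | hkj
    · have h1 := hCk k j hkj
      have h2 := ha_mono hn.le
      have h3 := mul_le_mul_of_nonneg_right (hk1 k) (ha_pos n).le
      have h4 := mul_nonneg (hk0 j).le (ha_pos n).le
      linarith
    · have h1 : 1 / ((k : ℝ) + 1) ≤ 1 / ((j : ℝ) + 1) := by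
        have : (j : ℝ) ≤ k := by exact_mod_cast hkj
        gcongr
      have h3 := mul_le_mul_of_nonneg_right h1 (ha_pos n).le
      have := hC0 j
      linarith
  refine ⟨fun x => Real.exp (φ (Real.log x)), ?_, ?_, fun x _ => Real.exp_pos _, ?_, ?_⟩
  · refine Real.continuous_exp.comp_continuousOn (hcont.comp_continuousOn ?_)
    exact Real.continuousOn_log.mono fun x hx => ne_of_gt hx
  · intro x hx y hy hxy
    exact Real.exp_le_exp.2 (hmono (Real.log_le_log hx hxy))
  · intro s hs
    obtain ⟨k, hk⟩ := exists_nat_one_div_lt (sub_pos.2 hs)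
    have hsum := (hconv (s - 1 / ((k : ℝ) + 1)) (by linarith)).mul_left (Real.exp (C k))
    refine Summable.of_nonneg_of_le (fun n => by positivity) (fun n => ?_) hsum
    beta_reduce
    rw [Real.log_exp, ← Real.exp_add, ← Real.exp_add]
    refine Real.exp_le_exp.2 ?_
    have := hle (a n) k
    linarith
  · intro s hs hsum
    obtain ⟨k, hk⟩ := exists_nat_gt (∑' n, Real.exp (-s * a n) * Real.exp (φ (Real.log (Real.exp (a n)))))
    have h1 := hsum.sum_le_tsum (Finset.range (N k)) (fun n _ => by positivity)
    have h2 : ∑ n ∈ Finset.range (N k), Real.exp (-(δ - 1 / ((k : ℝ) + 1)) * a n) ≤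
        ∑ n ∈ Finset.range (N k),
          Real.exp (-s * a n) * Real.exp (φ (Real.log (Real.exp (a n)))) := by
      refine Finset.sum_le_sum fun n hn => ?_
      rw [Real.log_exp, ← Real.exp_add]
      refine Real.exp_le_exp.2 ?_
      have h3 := hlow k n (Finset.mem_range.1 hn)
      have h4 := mul_le_mul_of_nonneg_right hs (ha_pos n).le
      linarith
    have h5 := hN k
    linarith
end

section
/- Let Γ ≤ GL(3,ℂ) be a discrete subgroup all of whose elements are upper triangular. For x, y ∈ ℂ let g_{x,y} be the matrix with rows (1, x, y), (0, 1, 0), (0, 0, 1), and for (x,y) ≠ (0,0) let ℓ_{x,y} ⊆ ℂ³ be the 2-dimensional subspace spanned by (1,0,0) and (0, −y, x). Let 𝒞 be the union of the sets ℓ_{x,y} over all pairs (x,y) ≠ (0,0) with g_{x,y} ∈ Γ. Then every γ ∈ Γ leaves 𝒞 invariant: the image of 𝒞 under the linear map γ equals 𝒞. -/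
/-- The cone `𝒞(Γ)` of a subgroup `Γ ≤ GL(3, ℂ)`: the union, over the pairs
`(x, y) ≠ (0, 0)` such that the unipotent matrix `g_{x,y}` (rows `(1,x,y)`, `(0,1,0)`,
`(0,0,1)`) belongs to `Γ`, of the planes `ℓ_{x,y} = span{(1,0,0), (0,−y,x)}` of `ℂ³`. -/
def cone (Γ : Subgroup (Matrix.GeneralLinearGroup (Fin 3) ℂ)) : Set (Fin 3 → ℂ) :=
  ⋃ p ∈ {q : ℂ × ℂ | q ≠ 0 ∧
      ∃ g ∈ Γ, (g : Matrix (Fin 3) (Fin 3) ℂ) = !![1, q.1, q.2; 0, 1, 0; 0, 0, 1]},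
    (Submodule.span ℂ {![1, 0, 0], ![0, -p.2, p.1]} : Set (Fin 3 → ℂ))

lemma mem_cone_iff (Γ : Subgroup (Matrix.GeneralLinearGroup (Fin 3) ℂ)) (v : Fin 3 → ℂ) :
    v ∈ cone Γ ↔ ∃ x y : ℂ, (x ≠ 0 ∨ y ≠ 0) ∧
      (∃ g ∈ Γ, (g : Matrix (Fin 3) (Fin 3) ℂ) = !![1, x, y; 0, 1, 0; 0, 0, 1]) ∧
      x * v 1 + y * v 2 = 0 := by
  have key : ∀ x y : ℂ, (x ≠ 0 ∨ y ≠ 0) →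
      (v ∈ Submodule.span ℂ {![1, 0, 0], ![0, -y, x]} ↔ x * v 1 + y * v 2 = 0) := by
    intro x y hxy
    rw [Submodule.mem_span_pair]
    constructor
    · rintro ⟨a, b, rfl⟩
      simp
      ring
    · intro h
      rcases hxy with hx | hy
      · refine ⟨v 0, v 2 / x, ?_⟩
        ext i
        fin_cases i
        · simp
        · simp
          field_simp
          linear_combination -h
        · simp
          field_simp
      · refine ⟨v 0, -v 1 / y, ?_⟩
        ext i
        fin_cases i
        · simp
        · simp
          field_simp
        · simp
          field_simp
          linear_combination -h
  unfold cone
  simp only [Set.mem_iUnion, Set.mem_ofPred_eq, SetLike.mem_coe, exists_prop, Prod.exists]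
  refine exists_congr fun x => exists_congr fun y => ?_
  have hne : ((x, y) : ℂ × ℂ) ≠ 0 ↔ (x ≠ 0 ∨ y ≠ 0) := by
    rw [Ne, Prod.mk_eq_zero, not_and_or]
  rw [hne, and_assoc]
  refine and_congr_right fun hxy => and_congr_right fun _ => key x y hxy

lemma mulVec_mem_cone (Γ : Subgroup (Matrix.GeneralLinearGroup (Fin 3) ℂ))
    (hupper : ∀ γ ∈ Γ, ∀ i j : Fin 3, j < i → (γ : Matrix (Fin 3) (Fin 3) ℂ) i j = 0)
    (γ : Matrix.GeneralLinearGroup (Fin 3) ℂ) (hγ : γ ∈ Γ) (v : Fin 3 → ℂ) (hv : v ∈ cone Γ) :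
    (γ : Matrix (Fin 3) (Fin 3) ℂ).mulVec v ∈ cone Γ := by
  rw [mem_cone_iff] at hv ⊢
  obtain ⟨x, y, hxy, ⟨g, hg, hgm⟩, h⟩ := hv
  have h10 := hupper γ hγ 1 0 (by decide)
  have h20 := hupper γ hγ 2 0 (by decide)
  have h21 := hupper γ hγ 2 1 (by decide)
  have hdet : (γ : Matrix (Fin 3) (Fin 3) ℂ).det ≠ 0 :=
    ((Matrix.isUnit_iff_isUnit_det _).1 γ.isUnit).ne_zero
  have hinv : (γ : Matrix (Fin 3) (Fin 3) ℂ) * ((γ⁻¹ : Matrix.GeneralLinearGroup (Fin 3) ℂ) :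
      Matrix (Fin 3) (Fin 3) ℂ) = 1 := by
    rw [← Units.val_mul, mul_inv_cancel, Units.val_one]
  have hc : ((γ * g * γ⁻¹ : Matrix.GeneralLinearGroup (Fin 3) ℂ) : Matrix (Fin 3) (Fin 3) ℂ) =
    (γ : Matrix (Fin 3) (Fin 3) ℂ) * g * ((γ⁻¹ : Matrix.GeneralLinearGroup (Fin 3) ℂ) :
      Matrix (Fin 3) (Fin 3) ℂ) := rfl
  have hmem := Γ.mul_mem (Γ.mul_mem hγ hg) (Γ.inv_mem hγ)
  generalize ((γ⁻¹ : Matrix.GeneralLinearGroup (Fin 3) ℂ) : Matrix (Fin 3) (Fin 3) ℂ) = N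
    at hinv hc
  generalize (γ : Matrix (Fin 3) (Fin 3) ℂ) = M at *
  rw [Matrix.det_fin_three, h10, h20, h21] at hdet
  have ha : M 0 0 ≠ 0 := by rintro h0; simp [h0] at hdet
  have hd : M 1 1 ≠ 0 := by rintro h0; simp [h0] at hdet
  have hf : M 2 2 ≠ 0 := by rintro h0; simp [h0] at hdet
  refine ⟨M 0 0 * x / M 1 1, M 0 0 * (y / M 2 2 - x * M 1 2 / (M 1 1 * M 2 2)), ?_,
    ⟨_, hmem, ?_⟩, ?_⟩
  · by_cases hx : x = 0
    · right
      subst hx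
      have hy : y ≠ 0 := by simpa using hxy
      simp [ha, hy, hf]
    · left
      simp [ha, hx, hd]
  · rw [hc, hgm]
    have : M * !![1, x, y; 0, 1, 0; 0, 0, 1] =
        !![1, M 0 0 * x / M 1 1, M 0 0 * (y / M 2 2 - x * M 1 2 / (M 1 1 * M 2 2));
          0, 1, 0; 0, 0, 1] * M := by
      ext i j
      fin_cases i <;> fin_cases j <;>
        simp [Matrix.mul_apply, Fin.sum_univ_three, h10, h20, h21]
      · field_simp
        ring
      · field_simp
        ring
    rw [this, Matrix.mul_assoc, hinv, Matrix.mul_one]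
  · simp only [Matrix.mulVec, dotProduct, Fin.sum_univ_three, h10, h20, h21]
    field_simp
    linear_combination M 0 0 * M 1 1 * M 2 2 * h

/-- If `Γ ≤ GL(3, ℂ)` is a discrete subgroup of upper triangular matrices, then every
`γ ∈ Γ` leaves the cone `𝒞(Γ)` invariant: the image of `𝒞(Γ)` under the linear map `γ`
equals `𝒞(Γ)`. -/
theorem stmt_17 (Γ : Subgroup (Matrix.GeneralLinearGroup (Fin 3) ℂ))
    (hdisc : DiscreteTopology Γ)
    (hupper : ∀ γ ∈ Γ, ∀ i j : Fin 3, j < i → (γ : Matrix (Fin 3) (Fin 3) ℂ) i j = 0) :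
    ∀ γ ∈ Γ, (γ : Matrix (Fin 3) (Fin 3) ℂ).mulVec '' cone Γ = cone Γ := by
  intro γ hγ
  apply Set.Subset.antisymm
  · rintro _ ⟨v, hv, rfl⟩
    exact mulVec_mem_cone Γ hupper γ hγ v hv
  · intro v hv
    refine ⟨_, mulVec_mem_cone Γ hupper γ⁻¹ (Γ.inv_mem hγ) v hv, ?_⟩
    rw [Matrix.mulVec_mulVec, ← Units.val_mul, mul_inv_cancel, Units.val_one, Matrix.one_mulVec]
end
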